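/- Let K be a field such that either char(K) = 2 or K contains ℚ(√−7), and let G_48 ⊆ S_8 be the subgroup of order 1344 generated by σ_1 = (1,2)(3,4)(5,6)(7,8), σ_2 = (1,3)(2,4)(5,7)(6,8), θ = (2,3,7,4,5,6,8), κ = (1,5)(2,6)(3,7)(4,8), φ_1 = (2,3,4)(7,6,5), and φ_2 = (2,3)(7,6). Then the fixed field K(x_1,…,x_8)^{G_48} is K-rational. -/

import Mathlib

noncomputable section

/-- The rational function field `K(x_i : i ∈ I)` over `K`, realized as the fraction field
of the multivariate polynomial ring. -/
abbrev RFF (K : Type) [Field K] (I : Type) := FractionRing (MvPolynomial I K)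

/-- The image of the variable `x_i` in the rational function field `K(x_i : i ∈ I)`. -/
noncomputable def Xvar (K : Type) [Field K] (I : Type) (i : I) : RFF K I :=
  algebraMap (MvPolynomial I K) (RFF K I) (MvPolynomial.X i)

/-- Permutations of the variables as `K`-algebra automorphisms of the polynomial ring. -/
def renameHom (K : Type) [Field K] (I : Type) :
    Equiv.Perm I →* (MvPolynomial I K ≃ₐ[K] MvPolynomial I K) where
  toFun σ := MvPolynomial.renameEquiv K σ
  map_one' := MvPolynomial.renameEquiv_refl K
  map_mul' σ τ := (MvPolynomial.renameEquiv_trans K τ σ).symm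

/-- The action of permutations of the variables on `K(x_i : i ∈ I)` by `K`-automorphisms,
determined by `σ(x_i) = x_{σ(i)}`. -/
noncomputable def permHom (K : Type) [Field K] (I : Type) :
    Equiv.Perm I →* (RFF K I ≃ₐ[K] RFF K I) :=
  (IsFractionRing.fieldEquivOfAlgEquivHom K (RFF K I)).comp (renameHom K I)

/-- The fixed field `K(x_i : i ∈ I)^G` of a group `G` of permutations of the variables. -/
noncomputable def fixedSub (K : Type) [Field K] (I : Type) (G : Subgroup (Equiv.Perm I)) :
    IntermediateField K (RFF K I) :=
  IntermediateField.fixedField (G.map (permHom K I))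

/-- An extension `L/K` is `K`-rational if it is purely transcendental over `K`, i.e. generated
by finitely many algebraically independent elements. -/
def IsRatExt (K : Type) [Field K] (L : Type*) [Field L] [Algebra K L] : Prop :=
  ∃ (n : ℕ) (t : Fin n → L), AlgebraicIndependent K t ∧
    IntermediateField.adjoin K (Set.range t) = ⊤

/-!
Number the points in binary. Then `G₄₈` is the affine group of `𝔽₂³`, of order `8 · 168`, and by
Galois theory it suffices to find eight invariants over which `K(x)` has degree at most `1344`.
Most of them come from Galois descent: a space that is spanned by `n + 1` elements, contains `1` and
is stable under a faithful semilinear action is spanned by `1` and `n` invariants.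

In characteristic `2`, the sum `s` of the variables and the coordinate forms `ℓ` generate a stable
field. Its elements `N(ℓ) = ℓ² + sℓ` are fixed by the translations, and the linear maps act on them
as on the `ℓ`, so `s` and the Dickson invariants of the `N(ℓ)` are four invariants, over which this
field has degree at most `8 · 168`. The variables and `1` lie in a five-dimensional space over it,
and descent provides the other four.

In characteristic `0`, the invariants of the translations form a field of degree `8` below `K(x)`,
generated by eight monomials in the eigenvectors of the translations. The linear maps permute these
monomials like the points of `𝔽₂³`. Since `√-7 ∈ K`, the group `GL₃(𝔽₂)` has Klein's representation
of degree `3` over `K`, and descent turns three invariants into a point `(x : y : 1)` of the plane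
on which the group acts through this representation. Two quotients of Klein's invariants of
degrees `4`, `6` and `14`, which are power sums and the product of seven quadratic forms that
Klein's group permutes, generate a field over which `K(x, y)` has degree at most `168`. The seven
monomials other than the invariant one, normalized to have sum `1`, span a stable space over
`K(x, y)`, and descent provides the other six invariants.
-/

open IntermediateField Matrix

section Descent

variable {K L Γ : Type*} [Field K] [Field L] [Algebra K L] [Group Γ]

/-- Semilinear Galois descent: Dedekind independence of the automorphisms prevents all traces of
multiples of a given vector from lying in a proper subspace that does not contain the vector. -/
theorem le_span_fixed_of_semilinear [Finite Γ] {F V : Type*} [Field F] [AddCommGroup V]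
    [Module F V] {ρ : Γ →* (F →+* F)} (hρ : Function.Injective ρ) {T : Γ →* AddMonoid.End V}
    (hT : ∀ g a v, T g (a • v) = ρ g a • T g v) {W : Submodule F V}
    (hW : ∀ g, ∀ w ∈ W, T g w ∈ W) :
    W ≤ Submodule.span F {v | v ∈ W ∧ ∀ g, T g v = v} := by
  have := Fintype.ofFinite Γ
  intro w hw
  by_contra hwX
  obtain ⟨φ, hφw, hφ⟩ := Submodule.exists_le_ker_of_notMem hwX
  have trace_mem (c : F) : ∑ g, T g (c • w) ∈ {v | v ∈ W ∧ ∀ g, T g v = v} := by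
    refine ⟨W.sum_mem fun g _ => hW g _ (W.smul_mem c hw), fun h => ?_⟩
    rw [map_sum]
    calc ∑ g, T h (T g (c • w)) = ∑ g, T (h * g) (c • w) := by simp only [map_mul]; rfl
      _ = ∑ g, T g (c • w) := (Group.mulLeft_bijective h).sum_comp fun g => T g (c • w)
  have vanish (c : F) : ∑ g, φ (T g w) * ρ g c = 0 := by
    have := hφ (Submodule.subset_span (trace_mem c))
    simpa only [LinearMap.mem_ker, hT, map_sum, map_smul, smul_eq_mul, mul_comm] using this
  have indep : LinearIndependent F fun g => (ρ g : F → F) :=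
    (linearIndependent_monoidHom F F).comp (fun g => (ρ g : F →* F))
      fun g h hgh => hρ (RingHom.coe_monoidHom_injective hgh)
  have := Fintype.linearIndependent_iff.mp indep (fun g => φ (T g w))
    (by ext c; simpa using vanish c) 1
  exact hφw (by simpa using this)

/-- The restriction of an action by automorphisms to a stable intermediate field. -/
def restrictStable (ρ : Γ →* (L ≃ₐ[K] L)) (F : IntermediateField K L)
    (hF : ∀ g, ∀ a ∈ F, ρ g a ∈ F) : Γ →* (F →+* F) where
  toFun g := ((ρ g : L →+* L).comp (algebraMap F L)).codRestrict F fun a => hF g a a.2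
  map_one' := by ext; simp
  map_mul' g h := by ext a; exact DFunLike.congr_fun (map_mul ρ g h) (a : L)

theorem restrictStable_injective {ρ : Γ →* (L ≃ₐ[K] L)} {F : IntermediateField K L}
    (hF : ∀ g, ∀ a ∈ F, ρ g a ∈ F) (hfaith : ∀ g, (∀ a ∈ F, ρ g a = a) → g = 1) :
    Function.Injective (restrictStable ρ F hF) := by
  rw [injective_iff_map_eq_one]
  refine fun g hg => hfaith g fun a ha => ?_
  exact congrArg Subtype.val (DFunLike.congr_fun hg ⟨a, ha⟩)

theorem mem_of_mem_span_of_le {F A : IntermediateField K L} {s : Set L} (hFA : F ≤ A)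
    (hs : s ⊆ A) {x : L} (hx : x ∈ Submodule.span F s) : x ∈ A := by
  induction hx using Submodule.span_induction with
  | mem x hx => exact hs hx
  | zero => exact A.zero_mem
  | add x y _ _ hx hy => exact A.add_mem hx hy
  | smul a x _ hx => exact A.mul_mem (hFA a.2) hx

theorem exists_finset_subset_span_insert {F V : Type*} [Field F] [AddCommGroup V] [Module F V]
    {n : ℕ} {w : Fin (n + 1) → V} {X : Set V} (hX : X ⊆ Submodule.span F (Set.range w)) {x : V}
    (hxX : x ∈ X) (hx : x ≠ 0) :
    ∃ S : Finset V, S.card ≤ n ∧ (S : Set V) ⊆ X ∧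
      X ⊆ Submodule.span F (insert x (S : Set V)) := by
  classical
  obtain ⟨b, hbX, hxb, hXb, hb⟩ := exists_linearIndepOn_id_extension (K := F)
    (.singleton hx) (Set.singleton_subset_iff.mpr hxX)
  have hbw : Set.range ((↑) : b → V) ≤ Submodule.span F (Set.range w) := by
    rw [Subtype.range_coe]; exact hbX.trans hX
  have := hb.finite_of_le_span_finite _ _ hbw
  have := Fintype.ofFinite b
  have hcard : b.toFinset.card ≤ n + 1 := by
    rw [Set.toFinset_card]
    exact (linearIndependent_le_span_aux' _ hb _ hbw).trans
      ((Fintype.card_range_le w).trans_eq (Fintype.card_fin _))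
  refine ⟨b.toFinset.erase x, ?_, ?_, ?_⟩
  · rw [Finset.card_erase_of_mem (by simpa using hxb)]
    lia
  · exact fun v hv => hbX (by simpa using Finset.mem_of_mem_erase hv)
  · simpa [Set.insert_eq_of_mem (Set.singleton_subset_iff.mp hxb)] using hXb

/-- By descent, a stable space containing `1` is spanned by `1` and invariants, so that one
generator is saved. -/
theorem exists_invariants_mem_sup_adjoin [Finite Γ] {ρ : Γ →* (L ≃ₐ[K] L)}
    {F : IntermediateField K L} (hF : ∀ g, ∀ a ∈ F, ρ g a ∈ F)
    (hfaith : ∀ g, (∀ a ∈ F, ρ g a = a) → g = 1) {n : ℕ} {w : Fin (n + 1) → L}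
    (hw : ∀ g i, ρ g (w i) ∈ Submodule.span F (Set.range w))
    (h1 : 1 ∈ Submodule.span F (Set.range w)) :
    ∃ S : Finset L, S.card ≤ n ∧ (∀ s ∈ S, ∀ g, ρ g s = s) ∧
      (∀ s ∈ S, s ∈ Submodule.span F (Set.range w)) ∧
      ∀ i, w i ∈ F ⊔ adjoin K (S : Set L) := by
  set U := Submodule.span F (Set.range w)
  let T : Γ →* AddMonoid.End L := (DistribMulAction.toAddMonoidEnd (L ≃ₐ[K] L) L).comp ρ
  have hT (g : Γ) (a : F) (v : L) : T g (a • v) = restrictStable ρ F hF g a • T g v :=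
    map_mul (ρ g) (a : L) v
  have hU (g : Γ) : ∀ u ∈ U, T g u ∈ U := by
    intro u hu
    induction hu using Submodule.span_induction with
    | mem u hu => obtain ⟨i, rfl⟩ := hu; exact hw g i
    | zero => rw [map_zero]; exact U.zero_mem
    | add u v _ _ hu hv => rw [map_add]; exact U.add_mem hu hv
    | smul a u _ hu => rw [hT]; exact U.smul_mem _ hu
  have hspan := le_span_fixed_of_semilinear (restrictStable_injective hF hfaith) hT hU
  obtain ⟨S, hcard, hS, hXS⟩ := exists_finset_subset_span_insert (n := n)
    (fun v (hv : v ∈ {v | v ∈ U ∧ ∀ g, T g v = v}) => hv.1) ⟨h1, fun g => map_one (ρ g)⟩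
    one_ne_zero
  refine ⟨S, hcard, fun s hs => (hS hs).2, fun s hs => (hS hs).1, fun i => ?_⟩
  have hwi : w i ∈ Submodule.span F (insert 1 (S : Set L)) :=
    (hspan.trans (Submodule.span_le.mpr hXS)) (Submodule.subset_span ⟨i, rfl⟩)
  refine mem_of_mem_span_of_le le_sup_left (Set.insert_subset (one_mem _) ?_) hwi
  exact (subset_adjoin K _).trans (SetLike.coe_subset_coe.mpr le_sup_right)

theorem exists_basis_fixed_of_semilinear [Finite Γ] {F V ι : Type*} [Field F] [AddCommGroup V]
    [Module F V] {ρ : Γ →* (F →+* F)} (hρ : Function.Injective ρ) {T : Γ →* AddMonoid.End V}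
    (hT : ∀ g a v, T g (a • v) = ρ g a • T g v) (b : Module.Basis ι F V) :
    ∃ b' : Module.Basis ι F V, ∀ g i, T g (b' i) = b' i := by
  have hspan := le_span_fixed_of_semilinear (W := ⊤) hρ hT fun _ _ _ => Submodule.mem_top
  let c := Module.Basis.ofSpan hspan
  refine ⟨c.reindex (c.indexEquiv b), fun g i => ?_⟩
  rw [Module.Basis.reindex_apply]
  exact (Module.Basis.ofSpan_subset hspan ⟨_, rfl⟩).2 g

/-- The semilinear action of `Γ` on `F^ι` with matrices `R g`, whose entries `Γ` fixes. -/
def semilinearAction {F ι : Type*} [Field F] [Fintype ι] [DecidableEq ι] (ρ : Γ →* (F →+* F))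
    (R : Γ →* Matrix ι ι F) (hR : ∀ g h, (R h).map (ρ g) = R h) : Γ →* AddMonoid.End (ι → F) where
  toFun g :=
    { toFun v := R g *ᵥ (ρ g ∘ v)
      map_zero' := by simp [Pi.comp_zero]
      map_add' v v' := by
        rw [← Matrix.mulVec_add]
        exact congrArg _ (funext fun i => map_add _ _ _) }
  map_one' := by
    ext v i
    change (R 1 *ᵥ (ρ 1 ∘ v)) i = v i
    rw [map_one R, one_mulVec, map_one]
    rfl
  map_mul' g h := by
    ext v i
    have hv : ρ g ∘ (R h *ᵥ (ρ h ∘ v)) = R h *ᵥ (ρ (g * h) ∘ v) := by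
      ext i
      rw [Function.comp_apply, RingHom.map_mulVec, hR, map_mul]
      rfl
    change (R (g * h) *ᵥ (ρ (g * h) ∘ v)) i = (R g *ᵥ (ρ g ∘ (R h *ᵥ (ρ h ∘ v)))) i
    rw [hv, mulVec_mulVec, map_mul R]

/-- By descent, the action on `F^ι` twisted by the representation `R` has a basis of fixed vectors;
its matrix transforms `w` into `A`. -/
theorem exists_equivariant_vector [Finite Γ] {ρ : Γ →* (L ≃ₐ[K] L)} {F : IntermediateField K L}
    (hF : ∀ g, ∀ a ∈ F, ρ g a ∈ F) (hfaith : ∀ g, (∀ a ∈ F, ρ g a = a) → g = 1) {ι : Type*}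
    [Fintype ι] [DecidableEq ι] (R : Γ →* Matrix ι ι K) {w : ι → L} (hw : ∀ g i, ρ g (w i) = w i) :
    ∃ A : ι → L, (∀ g, (R g).map (algebraMap K L) *ᵥ (ρ g ∘ A) = A) ∧
      (∀ i, A i ∈ Submodule.span F (Set.range w)) ∧
      ∀ i, w i ∈ Submodule.span F (Set.range A) := by
  let T : Γ →* AddMonoid.End (ι → F) := semilinearAction (restrictStable ρ F hF)
    ((algebraMap K F).mapMatrix.toMonoidHom.comp R) fun g h => by
      ext i j
      exact (ρ g).commutes (R h i j)
  have hT (g : Γ) (a : F) (v : ι → F) : T g (a • v) = restrictStable ρ F hF g a • T g v := by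
    change _ *ᵥ _ = _ • (_ *ᵥ _)
    rw [← Matrix.mulVec_smul]
    exact congrArg _ (funext fun i => map_mul _ _ _)
  obtain ⟨b, hb⟩ := exists_basis_fixed_of_semilinear (restrictStable_injective hF hfaith) hT
    (Pi.basisFun F ι)
  let P : Matrix ι ι L := ((Pi.basisFun F ι).toMatrix b).map (algebraMap F L)
  let Q : Matrix ι ι L := (b.toMatrix (Pi.basisFun F ι)).map (algebraMap F L)
  have hQP : Q * P = 1 := by
    rw [← Matrix.map_mul, b.toMatrix_mul_toMatrix_flip, Matrix.map_one _ (map_zero _) (map_one _)]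
  have hRP (g : Γ) : (R g).map (algebraMap K L) * P.map (ρ g) = P := by
    ext i j
    have := congrArg (algebraMap F L) (congrFun (hb g j) i)
    exact (RingHom.map_mulVec _ _ _ i).symm.trans this
  have hPw (g : Γ) : ρ g ∘ (P *ᵥ w) = P.map (ρ g) *ᵥ w := by
    ext i
    have := RingHom.map_mulVec (ρ g : L →+* L) P w i
    rwa [show (ρ g : L →+* L) ∘ w = w from funext (hw g)] at this
  refine ⟨P *ᵥ w, fun g => ?_, fun i => ?_, fun i => ?_⟩
  · rw [hPw, mulVec_mulVec, hRP]
  · exact sum_mem fun j _ => Submodule.smul_mem _ (b j i) (Submodule.subset_span ⟨j, rfl⟩)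
  · have hw' : w = Q *ᵥ (P *ᵥ w) := by rw [mulVec_mulVec, hQP, one_mulVec]
    rw [congrFun hw' i]
    exact sum_mem fun j _ => Submodule.smul_mem _ (b.toMatrix (Pi.basisFun F ι) i j)
      (Submodule.subset_span ⟨j, rfl⟩)

end Descent

section RelativeDegree

variable {K L : Type*} [Field K] [Field L] [Algebra K L]

theorem relrank_sup_adjoin_le {A : IntermediateField K L} {P : Polynomial A} (hP : P ≠ 0) {a : L}
    (ha : Polynomial.aeval a P = 0) : relrank A (A ⊔ adjoin K {a}) ≤ P.natDegree := by
  have hint : IsIntegral A a := (show IsAlgebraic A a from ⟨P, hP, ha⟩).isIntegral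
  have := adjoin.finiteDimensional hint
  have h : extendScalars (le_sup_left : A ≤ A ⊔ adjoin K {a}) = adjoin A {a} :=
    restrictScalars_injective K <| by
      rw [extendScalars_restrictScalars, restrictScalars_adjoin_eq_sup]
  rw [relrank_eq_rank_of_le le_sup_left, h, ← Module.finrank_eq_rank, adjoin.finrank hint]
  exact_mod_cast Polynomial.natDegree_le_of_dvd (minpoly.dvd A a ha) hP

theorem relrank_sup_adjoin_insert_le {A : IntermediateField K L} {s : Set L} {m n : ℕ}
    (hm : relrank A (A ⊔ adjoin K s) ≤ m) {a : L} {c : Fin n → L}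
    (hc : ∀ i, c i ∈ A ⊔ adjoin K s) (ha : a ^ n = ∑ i, c i * a ^ (i : ℕ)) :
    relrank A (A ⊔ adjoin K (insert a s)) ≤ (m * n : ℕ) := by
  set B := A ⊔ adjoin K s
  let q : Polynomial B := ∑ i : Fin n, Polynomial.C ⟨c i, hc i⟩ * .X ^ (i : ℕ)
  have hq : q.degree < n := Polynomial.degree_sum_fin_lt fun i : Fin n => (⟨c i, hc i⟩ : B)
  have hroot : Polynomial.aeval a (.X ^ n - q) = 0 := by simp [q, ha]
  have hdeg : (Polynomial.X ^ n - q).natDegree = n := by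
    refine Polynomial.natDegree_eq_of_degree_eq_some ?_
    rw [Polynomial.degree_sub_eq_left_of_degree_lt (by rwa [Polynomial.degree_X_pow]),
      Polynomial.degree_X_pow]
  have hstep : relrank B (B ⊔ adjoin K {a}) ≤ n := by
    simpa only [hdeg] using relrank_sup_adjoin_le (Polynomial.monic_X_pow_sub hq).ne_zero hroot
  have hinsert : A ⊔ adjoin K (insert a s) = B ⊔ adjoin K {a} := by
    rw [Set.insert_eq, Set.union_comm, adjoin_union, ← sup_assoc]
  rw [hinsert, ← relrank_mul_relrank (le_sup_left : A ≤ B) le_sup_left, Nat.cast_mul]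
  exact mul_le_mul' hm hstep

theorem eq_of_relrank_top_le {A B : IntermediateField K L} (hAB : A ≤ B)
    (h : relrank A ⊤ ≤ relfinrank B ⊤) : A = B := by
  have hmul := relfinrank_mul_relfinrank hAB le_top
  have hfin : Module.Finite A L := by
    rw [relrank_top_right] at h
    exact Module.rank_lt_aleph0_iff.mp (h.trans_lt Cardinal.natCast_lt_aleph0)
  have hpos : 0 < relfinrank A ⊤ := by rw [relfinrank_top_right]; exact Module.finrank_pos
  have hle : relfinrank A ⊤ ≤ relfinrank B ⊤ := by
    rw [relfinrank_eq_toNat_relrank A, ← Cardinal.toNat_natCast (relfinrank B ⊤)]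
    exact Cardinal.toNat_le_toNat h Cardinal.natCast_lt_aleph0
  have hone : relfinrank A B = 1 := by nlinarith [Nat.pos_of_mul_pos_left (hmul ▸ hpos)]
  exact hAB.antisymm (relfinrank_eq_one_iff.mp hone)

open scoped IntermediateField.algebraAdjoinAdjoin in
theorem algebraicIndependent_of_relrank_adjoin_le {J : Type*} [Fintype J] {t : J → L}
    (hJ : Fintype.card J ≤ Algebra.trdeg K L) {n : ℕ}
    (hn : relrank (adjoin K (Set.range t)) ⊤ ≤ n) : AlgebraicIndependent K t := by
  rw [relrank_top_right] at hn
  have := Module.rank_lt_aleph0_iff.mp (hn.trans_lt Cardinal.natCast_lt_aleph0)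
  have : Algebra.IsAlgebraic (Algebra.adjoin K (Set.range t)) L :=
    (IsFractionRing.comap_isAlgebraic_iff (K := adjoin K (Set.range t))).2
      (Algebra.IsAlgebraic.of_finite _ _)
  refine (Algebra.IsAlgebraic.isTranscendenceBasis_of_lift_le_trdeg_of_finite K t ?_).1
  rw [Cardinal.mk_fintype, Cardinal.lift_natCast]
  simpa using hJ

theorem isRatExt_adjoin_finset {K L : Type} [Field K] [Field L] [Algebra K L] {S : Finset L}
    (hS : AlgebraicIndependent K ((↑) : S → L)) : IsRatExt K (adjoin K (S : Set L)) := by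
  let t (i : Fin S.card) : adjoin K (S : Set L) :=
    ⟨S.equivFin.symm i, subset_adjoin K _ (S.equivFin.symm i).2⟩
  refine ⟨S.card, t, .of_comp (adjoin K (S : Set L)).val (hS.comp _ S.equivFin.symm.injective), ?_⟩
  apply IntermediateField.map_injective (adjoin K (S : Set L)).val
  have ht : (adjoin K (S : Set L)).val '' Set.range t = S := by
    rw [← Set.range_comp]
    change Set.range (Subtype.val ∘ S.equivFin.symm) = _
    rw [S.equivFin.symm.surjective.range_comp]
    simp
  rw [adjoin_map, ht, ← AlgHom.fieldRange_eq_map, fieldRange_val]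

end RelativeDegree

section RationalFunctionField

variable {K I : Type} [Field K]

theorem isTranscendenceBasis_Xvar : IsTranscendenceBasis K (Xvar K I) := by
  have : Algebra.IsAlgebraic (MvPolynomial I K) (RFF K I) :=
    IsLocalization.isAlgebraic _ (nonZeroDivisors (MvPolynomial I K))
  have h := (IsTranscendenceBasis.mvPolynomial I K).algebraMap_comp (A := RFF K I)
  exact h

@[simp]
theorem permHom_Xvar (g : Equiv.Perm I) (i : I) : permHom K I g (Xvar K I i) = Xvar K I (g i) := by
  simp [permHom, Xvar, renameHom]

theorem coe_permHom_comp_Xvar (g : Equiv.Perm I) : permHom K I g ∘ Xvar K I = Xvar K I ∘ g :=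
  funext (permHom_Xvar g)

theorem permHom_injective : Function.Injective (permHom K I) := by
  intro g h hgh
  ext i
  have := DFunLike.congr_fun hgh (Xvar K I i)
  rw [permHom_Xvar, permHom_Xvar] at this
  exact isTranscendenceBasis_Xvar.1.injective this

theorem adjoin_range_Xvar : adjoin K (Set.range (Xvar K I)) = ⊤ := by
  rw [eq_top_iff]
  intro x _
  have mem (p : MvPolynomial I K) :
      algebraMap _ (RFF K I) p ∈ adjoin K (Set.range (Xvar K I)) := by
    induction p using MvPolynomial.induction_on with
    | C a => exact (adjoin K _).algebraMap_mem a
    | add p q hp hq => rw [map_add]; exact add_mem hp hq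
    | mul_X p i hp => rw [map_mul]; exact mul_mem hp (subset_adjoin K _ ⟨i, rfl⟩)
  obtain ⟨p, q, -, rfl⟩ := IsFractionRing.div_surjective (A := MvPolynomial I K) x
  exact div_mem (mem p) (mem q)

theorem permHom_apply_eq_self_of_mem_closure {s : Set (Equiv.Perm I)} {x : RFF K I}
    (h : ∀ g ∈ s, permHom K I g x = x) {g : Equiv.Perm I} (hg : g ∈ Subgroup.closure s) :
    permHom K I g x = x :=
  have : Subgroup.closure s ≤
      (MulAction.stabilizer (RFF K I ≃ₐ[K] RFF K I) x).comap (permHom K I) :=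
    (Subgroup.closure_le _).mpr h
  this hg

theorem trdeg_RFF [Fintype I] : Algebra.trdeg K (RFF K I) = Fintype.card I := by
  rw [← isTranscendenceBasis_Xvar.cardinalMk_eq_trdeg, Cardinal.mk_fintype]

variable [Finite I]

theorem relfinrank_fixedSub_top (G : Subgroup (Equiv.Perm I)) :
    relfinrank (fixedSub K I G) ⊤ = Nat.card G := by
  classical
  have e := (G.equivMapOfInjective (permHom K I) permHom_injective).toEquiv
  have := Fintype.ofFinite G
  have := Fintype.ofEquiv _ e
  rw [relfinrank_top_right, Nat.card_congr e, Nat.card_eq_fintype_card]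
  exact FixedPoints.finrank_eq_card (G.map (permHom K I)) (RFF K I)

theorem adjoin_eq_fixedSub_of_relrank_le {G : Subgroup (Equiv.Perm I)} {S : Set (RFF K I)}
    (hfix : ∀ s ∈ S, ∀ g ∈ G, permHom K I g s = s)
    (hrank : relrank (adjoin K S) ⊤ ≤ Nat.card G) : adjoin K S = fixedSub K I G := by
  have hle : adjoin K S ≤ fixedSub K I G := by
    rw [adjoin_le_iff]
    rintro s hs ⟨_, g, hg, rfl⟩
    exact hfix s hs g hg
  exact eq_of_relrank_top_le hle (by rwa [relfinrank_fixedSub_top])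

/-- A subfield of the fixed field over which the whole field has degree at most `|G|` is the
fixed field, and as many generators as the transcendence degree allows must be independent. -/
theorem isRatExt_fixedSub_of_relrank_le {G : Subgroup (Equiv.Perm I)} {S : Finset (RFF K I)}
    (hcard : S.card ≤ Nat.card I) (hfix : ∀ s ∈ S, ∀ g ∈ G, permHom K I g s = s)
    (hrank : relrank (adjoin K (S : Set (RFF K I))) ⊤ ≤ Nat.card G) :
    IsRatExt K (fixedSub K I G) := by
  have := Fintype.ofFinite I
  rw [← adjoin_eq_fixedSub_of_relrank_le hfix hrank]
  have htrdeg : Fintype.card S ≤ Algebra.trdeg K (RFF K I) := by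
    rw [trdeg_RFF, Fintype.card_coe, ← Nat.card_eq_fintype_card]
    exact_mod_cast hcard
  exact isRatExt_adjoin_finset <| algebraicIndependent_of_relrank_adjoin_le htrdeg <| by
    rwa [Subtype.range_coe]

theorem permHom_mem_of_mem_closure {s : Set (Equiv.Perm I)} {T : Set (RFF K I)}
    (h : ∀ g ∈ s, ∀ t ∈ T, permHom K I g t ∈ adjoin K T) {g : Equiv.Perm I}
    (hg : g ∈ Subgroup.closure s) {x : RFF K I} (hx : x ∈ adjoin K T) :
    permHom K I g x ∈ adjoin K T := by
  classical
  rw [← Subgroup.mem_toSubmonoid, Subgroup.closure_toSubmonoid_of_finite] at hg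
  induction hg using Submonoid.closure_induction generalizing x with
  | mem g hg =>
    have : adjoin K T ≤ (adjoin K T).comap (permHom K I g : RFF K I →ₐ[K] RFF K I) :=
      adjoin_le_iff.mpr (h g hg)
    exact this hx
  | one => rwa [map_one]
  | mul g h _ _ hg hh => rw [map_mul]; exact hg (hh hx)

end RationalFunctionField

namespace G48

/-- The generator `σ₁ = (1,2)(3,4)(5,6)(7,8)`, with points renumbered from `0`. -/
def σ₁ : Equiv.Perm (Fin 8) :=
  Equiv.swap 0 1 * Equiv.swap 2 3 * Equiv.swap 4 5 * Equiv.swap 6 7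

/-- The generator `σ₂ = (1,3)(2,4)(5,7)(6,8)`, with points renumbered from `0`. -/
def σ₂ : Equiv.Perm (Fin 8) :=
  Equiv.swap 0 2 * Equiv.swap 1 3 * Equiv.swap 4 6 * Equiv.swap 5 7

/-- The generator `θ = (2,3,7,4,5,6,8)`, with points renumbered from `0`. -/
def θ : Equiv.Perm (Fin 8) :=
  Equiv.swap 1 2 * Equiv.swap 2 6 * Equiv.swap 6 3 * Equiv.swap 3 4 * Equiv.swap 4 5 *
    Equiv.swap 5 7

/-- The generator `κ = (1,5)(2,6)(3,7)(4,8)`, with points renumbered from `0`. -/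
def κ : Equiv.Perm (Fin 8) :=
  Equiv.swap 0 4 * Equiv.swap 1 5 * Equiv.swap 2 6 * Equiv.swap 3 7

/-- The generator `φ₁ = (2,3,4)(7,6,5)`, with points renumbered from `0`. -/
def φ₁ : Equiv.Perm (Fin 8) :=
  Equiv.swap 1 2 * Equiv.swap 2 3 * (Equiv.swap 6 5 * Equiv.swap 5 4)

/-- The generator `φ₂ = (2,3)(7,6)`, with points renumbered from `0`. -/
def φ₂ : Equiv.Perm (Fin 8) := Equiv.swap 1 2 * Equiv.swap 5 6

theorem coe_σ₁ : ⇑σ₁ = ![1, 0, 3, 2, 5, 4, 7, 6] := by decide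
theorem coe_σ₂ : ⇑σ₂ = ![2, 3, 0, 1, 6, 7, 4, 5] := by decide
theorem coe_θ : ⇑θ = ![0, 2, 6, 4, 5, 7, 3, 1] := by decide
theorem coe_κ : ⇑κ = ![4, 5, 6, 7, 0, 1, 2, 3] := by decide
theorem coe_φ₁ : ⇑φ₁ = ![0, 2, 3, 1, 6, 4, 5, 7] := by decide
theorem coe_φ₂ : ⇑φ₂ = ![0, 2, 1, 3, 4, 6, 5, 7] := by decide

end G48

open G48 in
/-- The group `G₄₈`, which is the affine group of the space `𝔽₂³` written on `8` points. -/
def G48 : Subgroup (Equiv.Perm (Fin 8)) := Subgroup.closure {σ₁, σ₂, θ, κ, φ₁, φ₂}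

namespace G48

/-- The subgroup of translations of the affine group `G₄₈`. -/
def translations : Subgroup (Equiv.Perm (Fin 8)) := Subgroup.closure {σ₁, σ₂, κ}

/-- The subgroup of linear maps, the stabiliser of the point `0` in the affine group `G₄₈`. -/
def linear : Subgroup (Equiv.Perm (Fin 8)) := Subgroup.closure {θ, φ₁, φ₂}

theorem translations_le : translations ≤ G48 := Subgroup.closure_mono (by grind)

theorem linear_le : linear ≤ G48 := Subgroup.closure_mono (by grind)

/-- The translation moving the point `0` to `i`. -/
def translation (i : Fin 8) : Equiv.Perm (Fin 8) :=
  σ₁ ^ ((i : ℕ) % 2) * σ₂ ^ ((i : ℕ) / 2 % 2) * κ ^ ((i : ℕ) / 4)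

theorem translation_mem (i : Fin 8) : translation i ∈ translations :=
  have mem {g} (h : g ∈ ({σ₁, σ₂, κ} : Set _)) : g ∈ translations := Subgroup.subset_closure h
  mul_mem (mul_mem (pow_mem (mem (by simp)) _) (pow_mem (mem (by simp)) _))
    (pow_mem (mem (by simp)) _)

theorem translation_apply_zero : ∀ i, translation i 0 = i := by decide +kernel

/-- The linear maps in a normal form: a power of the `7`-cycle `θ`, a power of an element of
order `4`, and an element of the copy of `S₃` generated by `φ₁` and `φ₂`. -/
def linearMap (q : Fin 7 × Fin 4 × Fin 3 × Fin 2) : Equiv.Perm (Fin 8) :=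
  θ ^ (q.1 : ℕ) * (θ * φ₂ * θ) ^ (q.2.1 : ℕ) * (φ₁ ^ (q.2.2.1 : ℕ) * φ₂ ^ (q.2.2.2 : ℕ))

theorem linearMap_mem (q) : linearMap q ∈ linear :=
  have mem {g} (h : g ∈ ({θ, φ₁, φ₂} : Set _)) : g ∈ linear := Subgroup.subset_closure h
  have hθ := mem (g := θ) (by simp)
  have hφ₂ := mem (g := φ₂) (by simp)
  mul_mem (mul_mem (pow_mem hθ _) (pow_mem (mul_mem (mul_mem hθ hφ₂) hθ) _))
    (mul_mem (pow_mem (mem (by simp)) _) (pow_mem hφ₂ _))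

theorem linearMap_apply_zero : ∀ q, linearMap q 0 = 0 := by decide +kernel

theorem linearMap_injective : Function.Injective linearMap := by
  let key (g : Equiv.Perm (Fin 8)) : ℕ := g 1 + 8 * g 2 + 64 * g 4
  have hkey : (Finset.univ.image (key ∘ linearMap)).card =
      (Finset.univ : Finset (Fin 7 × Fin 4 × Fin 3 × Fin 2)).card := by
    decide +kernel
  exact .of_comp (f := key) fun _ _ => Finset.card_image_iff.mp hkey (by simp) (by simp)

theorem le_card : 1344 ≤ Nat.card G48 := by
  have hinj : Function.Injective fun q : Fin 8 × (Fin 7 × Fin 4 × Fin 3 × Fin 2) =>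
      (⟨translation q.1 * linearMap q.2, mul_mem (translations_le (translation_mem q.1))
        (linear_le (linearMap_mem q.2))⟩ : G48) := by
    rintro ⟨i, q⟩ ⟨j, r⟩ h
    have hmul : translation i * linearMap q = translation j * linearMap r := congrArg Subtype.val h
    obtain rfl : i = j := by
      simpa [linearMap_apply_zero, translation_apply_zero] using DFunLike.congr_fun hmul 0
    rw [linearMap_injective (mul_left_cancel hmul)]
  simpa using Nat.card_le_card_of_injective _ hinj

theorem apply_zero_of_mem_linear {g : Equiv.Perm (Fin 8)} (hg : g ∈ linear) : g 0 = 0 := by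
  have : linear ≤ MulAction.stabilizer (Equiv.Perm (Fin 8)) (0 : Fin 8) :=
    (Subgroup.closure_le _).mpr (by rintro _ (rfl | rfl | rfl) <;> rfl)
  exact this hg

end G48

section Dickson

/-- The Dickson invariants of `GL₃(𝔽₂)`: the nonzero lower coefficients of the polynomial
`∏ v, (T - v) = T⁸ + d₄T⁴ + d₆T² + d₇T`, where `v` runs over the `𝔽₂`-span of `a`, `b`, `c`.
Here `e` and `f` are the values at `b` and `c` of the same product for the spans of `a` and of
`a`, `b`. -/
def dickson {R : Type*} [CommRing R] (a b c : R) : Fin 3 → R :=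
  let e := b ^ 2 + a * b
  let f := c ^ 4 + (a ^ 2 + e) * c ^ 2 + a * e * c
  ![(a ^ 2 + e) ^ 2 + f, a ^ 2 * e ^ 2 + (a ^ 2 + e) * f, a * e * f]

variable {R : Type*} [CommRing R] [CharP R 2]

theorem dickson_swap (a b c : R) : dickson b a c = dickson a b c := by
  have := CharTwo.two_eq_zero (R := R)
  ext j; fin_cases j <;> simp only [dickson] <;> simp <;> grind

theorem dickson_θ (a b c : R) : dickson (a + b + c) (a + c) a = dickson a b c := by
  have := CharTwo.two_eq_zero (R := R)
  ext j; fin_cases j <;> simp only [dickson] <;> simp <;> grind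

theorem dickson_φ₁ (a b c : R) : dickson (a + b + c) a c = dickson a b c := by
  have := CharTwo.two_eq_zero (R := R)
  ext j; fin_cases j <;> simp only [dickson] <;> simp <;> grind

variable {K L : Type*} [Field K] [Field L] [Algebra K L] [CharP L 2]

theorem relrank_sup_adjoin_le_of_dickson_mem {A : IntermediateField K L} {a b c : L}
    (h : ∀ j, dickson a b c j ∈ A) :
    relrank A (A ⊔ adjoin K {c, b, b ^ 2 + a * b, a}) ≤ (168 : ℕ) := by
  have := CharTwo.two_eq_zero (R := L)
  set d := dickson a b c with hd
  set e := b ^ 2 + a * b with he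
  have mem_of_mem {s : Set L} {x : L} (hx : x ∈ s) : x ∈ A ⊔ adjoin K s :=
    le_sup_right (a := A) (subset_adjoin K s hx)
  have d_mem (s : Set L) (j : Fin 3) : d j ∈ A ⊔ adjoin K s := le_sup_left (a := A) (h j)
  have h1 := relrank_sup_adjoin_insert_le (A := A) (s := ∅) (m := 1) (by simp) (a := a)
    (c := ![d 2, d 1, 0, d 0, 0, 0, 0])
    (by simp [Fin.forall_fin_succ, h])
    (by simp [hd, dickson, Fin.sum_univ_succ]; grind)
  have h2 := relrank_sup_adjoin_insert_le h1 (a := e)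
    (c := ![d 1 + a ^ 2 * (d 0 + a ^ 4), d 0 + a ^ 4, 0])
    (by
      simp (maxDischargeDepth := 6)
        [Fin.forall_fin_succ, add_mem, mul_mem, pow_mem, d_mem, mem_of_mem])
    (by simp [hd, dickson, Fin.sum_univ_succ]; grind)
  have h3 := relrank_sup_adjoin_insert_le h2 (a := b) (c := ![e, a])
    (by simp [Fin.forall_fin_succ, mem_of_mem])
    (by simp [he]; grind)
  have h4 := relrank_sup_adjoin_insert_le h3 (a := c)
    (c := ![d 0 + (a ^ 2 + e) ^ 2, a * e, a ^ 2 + e, 0])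
    (by
      simp (maxDischargeDepth := 6)
        [Fin.forall_fin_succ, mul_mem, add_mem, pow_mem, d_mem, mem_of_mem])
    (by simp [hd, dickson, Fin.sum_univ_succ]; grind)
  simpa using h4

theorem relrank_sup_adjoin_le_of_artinSchreier {A : IntermediateField K L} {s : L} (hs : s ∈ A)
    (ℓ : Fin 3 → L)
    (h : ∀ j, dickson (ℓ 0 ^ 2 + s * ℓ 0) (ℓ 1 ^ 2 + s * ℓ 1) (ℓ 2 ^ 2 + s * ℓ 2) j ∈ A) :
    ∃ t : Set L, Set.range ℓ ⊆ t ∧ relrank A (A ⊔ adjoin K t) ≤ (1344 : ℕ) := by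
  have := CharTwo.two_eq_zero (R := L)
  have adjoin_root {t : Set L} {m : ℕ} (ht : relrank A (A ⊔ adjoin K t) ≤ m) {x : L}
      (hx : x ^ 2 + s * x ∈ t) : relrank A (A ⊔ adjoin K (insert x t)) ≤ (m * 2 : ℕ) := by
    have hs' : s ∈ A ⊔ adjoin K t := le_sup_left (a := A) hs
    have hx' : x ^ 2 + s * x ∈ A ⊔ adjoin K t := le_sup_right (a := A) (subset_adjoin K t hx)
    exact relrank_sup_adjoin_insert_le ht (c := ![x ^ 2 + s * x, s])
      (by simp [Fin.forall_fin_succ, hs', hx']) (by simp; grind)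
  have h3 := adjoin_root (adjoin_root (adjoin_root (relrank_sup_adjoin_le_of_dickson_mem h)
    (x := ℓ 0) (by simp)) (x := ℓ 1) (by simp)) (x := ℓ 2) (by simp)
  exact ⟨_, by simp [Set.range_subset_iff, Fin.forall_fin_succ], h3⟩

end Dickson

section CharTwo

namespace G48

/-- The points of the affine space `𝔽₂³`, numbered in binary, where the `j`-th coordinate is `1`. -/
def plane (j : Fin 3) : Finset (Fin 8) := {i | (i : ℕ).testBit j}

theorem eq_one_of_map_plane {g : Equiv.Perm (Fin 8)}
    (hg : ∀ j, (plane j).map g.toEmbedding = plane j) : g = 1 := by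
  have mem_iff (i : Fin 8) (j : Fin 3) : i ∈ plane j ↔ g i ∈ plane j := by
    rw [← Finset.mem_map' g.toEmbedding, hg j, Equiv.coe_toEmbedding]
  have separated : ∀ i i' : Fin 8, (∀ j, i ∈ plane j ↔ i' ∈ plane j) → i' = i := by
    decide +kernel
  exact Equiv.ext fun i => separated i (g i) (mem_iff i)

/-- The form `∑ v, ℓⱼ(v) xᵥ`, where `ℓⱼ` is the `j`-th coordinate on `𝔽₂³`. -/
def coordForm {R : Type*} [AddCommMonoid R] (x : Fin 8 → R) (j : Fin 3) : R := ∑ i ∈ plane j, x i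

theorem coordForm_eq {R : Type*} [AddCommMonoid R] (x : Fin 8 → R) :
    coordForm x = ![x 1 + x 3 + x 5 + x 7, x 2 + x 3 + x 6 + x 7, x 4 + x 5 + x 6 + x 7] := by
  have planes : plane = ![{1, 3, 5, 7}, {2, 3, 6, 7}, {4, 5, 6, 7}] := by decide +kernel
  funext j
  fin_cases j <;> simp [coordForm, planes, add_assoc]

variable {R : Type*} [CommRing R] (x : Fin 8 → R)

/-- The invariants `N(ℓ) = ℓ² + sℓ` of the translations, for `s = ∑ v, x_v` and the coordinate
forms `ℓ`. In characteristic `2` the map `N` is additive, so that the linear maps act on the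
`N(ℓ)` as on the `ℓ`. -/
def translationInvariant (x : Fin 8 → R) (j : Fin 3) : R :=
  coordForm x j ^ 2 + (∑ i, x i) * coordForm x j

/-- The invariants of `G₄₈` in the field generated by the sum of the variables and the coordinate
forms. -/
def affineDickson (x : Fin 8 → R) : Fin 3 → R :=
  dickson (translationInvariant x 0) (translationInvariant x 1) (translationInvariant x 2)

theorem map_affineDickson {S F : Type*} [CommRing S] [FunLike F R S] [RingHomClass F R S] (f : F)
    (x : Fin 8 → R) (j : Fin 3) : f (affineDickson x j) = affineDickson (f ∘ x) j := by
  fin_cases j <;>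
    simp [affineDickson, dickson, translationInvariant, coordForm, map_sum]

theorem coordForm_comp_φ₂ :
    coordForm (x ∘ φ₂) = ![coordForm x 1, coordForm x 0, coordForm x 2] := by
  funext j
  fin_cases j <;> simp [coordForm_eq, coe_φ₂]; ring

variable [CharP R 2]

theorem coordForm_comp_σ₁ :
    coordForm (x ∘ σ₁) = ![coordForm x 0 + ∑ i, x i, coordForm x 1, coordForm x 2] := by
  have := CharTwo.two_eq_zero (R := R)
  funext j
  fin_cases j <;> simp [coordForm_eq, coe_σ₁, Fin.sum_univ_succ] <;> grind

theorem coordForm_comp_σ₂ :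
    coordForm (x ∘ σ₂) = ![coordForm x 0, coordForm x 1 + ∑ i, x i, coordForm x 2] := by
  have := CharTwo.two_eq_zero (R := R)
  funext j
  fin_cases j <;> simp [coordForm_eq, coe_σ₂, Fin.sum_univ_succ] <;> grind

theorem coordForm_comp_κ :
    coordForm (x ∘ κ) = ![coordForm x 0, coordForm x 1, coordForm x 2 + ∑ i, x i] := by
  have := CharTwo.two_eq_zero (R := R)
  funext j
  fin_cases j <;> simp [coordForm_eq, coe_κ, Fin.sum_univ_succ] <;> grind

theorem coordForm_comp_θ : coordForm (x ∘ θ) = ![coordForm x 0 + coordForm x 1 + coordForm x 2,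
    coordForm x 0 + coordForm x 2, coordForm x 0] := by
  have := CharTwo.two_eq_zero (R := R)
  funext j
  fin_cases j <;> simp [coordForm_eq, coe_θ] <;> grind

theorem coordForm_comp_φ₁ : coordForm (x ∘ φ₁) =
    ![coordForm x 0 + coordForm x 1 + coordForm x 2, coordForm x 0, coordForm x 2] := by
  have := CharTwo.two_eq_zero (R := R)
  funext j
  fin_cases j <;> simp [coordForm_eq, coe_φ₁] <;> grind

theorem affineDickson_comp {g : Equiv.Perm (Fin 8)} (hg : g ∈ ({σ₁, σ₂, θ, κ, φ₁, φ₂} : Set _)) :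
    affineDickson (x ∘ g) = affineDickson x := by
  have := CharTwo.two_eq_zero (R := R)
  have sum_comp : ∑ i, (x ∘ g) i = ∑ i, x i := Equiv.sum_comp g x
  have N_add (s a b : R) : (a + b) ^ 2 + s * (a + b) = (a ^ 2 + s * a) + (b ^ 2 + s * b) := by
    grind
  have N_self (s : R) : s ^ 2 + s * s = 0 := by grind
  simp only [affineDickson, translationInvariant, sum_comp]
  rcases hg with rfl | rfl | rfl | rfl | rfl | rfl
  · simp [coordForm_comp_σ₁, N_add, N_self]
  · simp [coordForm_comp_σ₂, N_add, N_self]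
  · simp [coordForm_comp_θ, N_add, dickson_θ]
  · simp [coordForm_comp_κ, N_add, N_self]
  · simp [coordForm_comp_φ₁, N_add, dickson_φ₁]
  · simp [coordForm_comp_φ₂, dickson_swap]

variable {K : Type} [Field K]

local notation "𝐱" => Xvar K (Fin 8)

theorem permHom_coordForm (g : Equiv.Perm (Fin 8)) (j : Fin 3) :
    permHom K (Fin 8) g (coordForm 𝐱 j) = coordForm (𝐱 ∘ g) j := by
  simp [coordForm, map_sum]

theorem permHom_sum (g : Equiv.Perm (Fin 8)) : permHom K (Fin 8) g (∑ i, 𝐱 i) = ∑ i, 𝐱 i := by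
  simpa [map_sum] using Equiv.sum_comp g 𝐱

variable (K) in
/-- The field `K(s, ℓ₁, ℓ₂, ℓ₃)` generated by the sum of the variables and the coordinate forms. -/
def formField : IntermediateField K (RFF K (Fin 8)) :=
  adjoin K (insert (∑ i, 𝐱 i) (Set.range (coordForm 𝐱)))

theorem sum_mem_formField : ∑ i, 𝐱 i ∈ formField K := subset_adjoin K _ (Set.mem_insert _ _)

theorem coordForm_mem_formField (j : Fin 3) : coordForm 𝐱 j ∈ formField K :=
  subset_adjoin K _ (Set.mem_insert_of_mem _ ⟨j, rfl⟩)

theorem sum_injective_of_linearIndependent {V ι : Type*} [AddCommGroup V] [Module K V]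
    [Finite ι] {v : ι → V} (hv : LinearIndependent K v) :
    Function.Injective fun s : Finset ι => ∑ i ∈ s, v i := by
  classical
  have := Fintype.ofFinite ι
  intro s t (hst : ∑ i ∈ s, v i = ∑ i ∈ t, v i)
  have h := Fintype.linearIndependent_iff.mp hv
    (fun i => (if i ∈ s then 1 else 0) - (if i ∈ t then 1 else 0))
    (by simp [sub_smul, ite_smul, Finset.sum_ite_mem, hst])
  ext i
  have := h i
  by_cases hs : i ∈ s <;> by_cases ht : i ∈ t <;> simp_all

theorem eq_one_of_forall_mem_formField {g : Equiv.Perm (Fin 8)}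
    (hg : ∀ a ∈ formField K, permHom K (Fin 8) g a = a) : g = 1 := by
  refine eq_one_of_map_plane fun j =>
    sum_injective_of_linearIndependent (isTranscendenceBasis_Xvar (K := K)).1.linearIndependent ?_
  have := hg _ (coordForm_mem_formField j)
  rw [permHom_coordForm] at this
  simpa [coordForm] using this

theorem permHom_mem_formField [CharP K 2] {g : Equiv.Perm (Fin 8)} (hg : g ∈ G48)
    {a : RFF K (Fin 8)} (ha : a ∈ formField K) : permHom K (Fin 8) g a ∈ formField K := by
  have : CharP (RFF K (Fin 8)) 2 := charP_of_injective_algebraMap (algebraMap K _).injective 2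
  refine permHom_mem_of_mem_closure (fun g hg t ht => ?_) hg ha
  change _ ∈ formField K
  have mem := coordForm_mem_formField (K := K)
  have sum_mem := sum_mem_formField (K := K)
  rcases ht with rfl | ⟨j, rfl⟩
  · rwa [permHom_sum]
  rw [permHom_coordForm]
  rcases hg with rfl | rfl | rfl | rfl | rfl | rfl
  · rw [coordForm_comp_σ₁]; fin_cases j <;> simp [add_mem, mem, sum_mem]
  · rw [coordForm_comp_σ₂]; fin_cases j <;> simp [add_mem, mem, sum_mem]
  · rw [coordForm_comp_θ]; fin_cases j <;> simp [add_mem, mem]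
  · rw [coordForm_comp_κ]; fin_cases j <;> simp [add_mem, mem, sum_mem]
  · rw [coordForm_comp_φ₁]; fin_cases j <;> simp [add_mem, mem]
  · rw [coordForm_comp_φ₂]; fin_cases j <;> simp [mem]

theorem permHom_affineDickson [CharP K 2] {g : Equiv.Perm (Fin 8)} (hg : g ∈ G48) (j : Fin 3) :
    permHom K (Fin 8) g (affineDickson 𝐱 j) = affineDickson 𝐱 j := by
  have : CharP (RFF K (Fin 8)) 2 := charP_of_injective_algebraMap (algebraMap K _).injective 2
  refine permHom_apply_eq_self_of_mem_closure (fun g hg => ?_) hg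
  rw [map_affineDickson, coe_permHom_comp_Xvar, affineDickson_comp 𝐱 hg]

theorem Xvar_mem_span_formField (i : Fin 8) :
    𝐱 i ∈ Submodule.span (formField K) (Set.range ![1, 𝐱 3, 𝐱 5, 𝐱 6, 𝐱 7]) := by
  set U := Submodule.span (formField K) (Set.range ![1, 𝐱 3, 𝐱 5, 𝐱 6, 𝐱 7])
  have w_mem (k : Fin 5) : ![1, 𝐱 3, 𝐱 5, 𝐱 6, 𝐱 7] k ∈ U := Submodule.subset_span ⟨k, rfl⟩
  have mem_of_mem {a : RFF K (Fin 8)} (ha : a ∈ formField K) : a ∈ U := by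
    simpa [Algebra.smul_def] using U.smul_mem (⟨a, ha⟩ : formField K) (w_mem 0)
  have form_mem (j : Fin 3) := mem_of_mem (coordForm_mem_formField j)
  have h3 : 𝐱 3 ∈ U := w_mem 1
  have h5 : 𝐱 5 ∈ U := w_mem 2
  have h6 : 𝐱 6 ∈ U := w_mem 3
  have h7 : 𝐱 7 ∈ U := w_mem 4
  have h1 : 𝐱 1 ∈ U := by
    convert U.sub_mem (form_mem 0) (add_mem (add_mem h3 h5) h7) using 1
    simp [coordForm_eq]
  have h2 : 𝐱 2 ∈ U := by
    convert U.sub_mem (form_mem 1) (add_mem (add_mem h3 h6) h7) using 1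
    simp [coordForm_eq]
  have h4 : 𝐱 4 ∈ U := by
    convert U.sub_mem (form_mem 2) (add_mem (add_mem h5 h6) h7) using 1
    simp [coordForm_eq]
  have h0 : 𝐱 0 ∈ U := by
    convert U.sub_mem (mem_of_mem sum_mem_formField)
      (add_mem (add_mem (add_mem h1 h2) (add_mem h3 h4)) (add_mem (add_mem h5 h6) h7)) using 1
    simp [Fin.sum_univ_succ]; ring
  fin_cases i
  exacts [h0, h1, h2, h3, h4, h5, h6, h7]

theorem exists_invariants_formField_sup_eq_top [CharP K 2] :
    ∃ S : Finset (RFF K (Fin 8)), S.card ≤ 4 ∧ (∀ s ∈ S, ∀ g ∈ G48, permHom K (Fin 8) g s = s) ∧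
      formField K ⊔ adjoin K (S : Set (RFF K (Fin 8))) = ⊤ := by
  let ρ := (permHom K (Fin 8)).comp G48.subtype
  let w := ![1, 𝐱 3, 𝐱 5, 𝐱 6, 𝐱 7]
  have h1 : 1 ∈ Submodule.span (formField K) (Set.range w) := Submodule.subset_span ⟨0, rfl⟩
  have hw (g : G48) (k : Fin 5) : ρ g (w k) ∈ Submodule.span (formField K) (Set.range w) := by
    have hX (i : Fin 8) := Xvar_mem_span_formField (K := K) (g.1 i)
    simp only [← permHom_Xvar] at hX
    fin_cases k
    · simpa [w] using h1
    exacts [hX 3, hX 5, hX 6, hX 7]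
  obtain ⟨S, hcard, hfix, -, hmem⟩ := exists_invariants_mem_sup_adjoin (ρ := ρ)
    (fun g _ ha => permHom_mem_formField g.2 ha)
    (fun g hg => Subtype.ext (eq_one_of_forall_mem_formField hg)) hw h1
  refine ⟨S, hcard, fun s hs g hg => hfix s hs ⟨g, hg⟩, ?_⟩
  rw [eq_top_iff, ← adjoin_range_Xvar, adjoin_le_iff]
  rintro _ ⟨i, rfl⟩
  exact mem_of_mem_span_of_le le_sup_left (Set.range_subset_iff.mpr hmem)
    (Xvar_mem_span_formField i)

theorem isRatExt_fixedSub_of_charTwo [CharP K 2] : IsRatExt K (fixedSub K (Fin 8) G48) := by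
  classical
  have : CharP (RFF K (Fin 8)) 2 := charP_of_injective_algebraMap (algebraMap K _).injective 2
  obtain ⟨S, hcard, hfix, htop⟩ := exists_invariants_formField_sup_eq_top (K := K)
  let T := insert (∑ i, 𝐱 i) (Finset.univ.image (affineDickson 𝐱)) ∪ S
  let A := adjoin K (T : Set (RFF K (Fin 8)))
  have mem {a : RFF K (Fin 8)} (ha : a ∈ T) : a ∈ A := subset_adjoin K _ ha
  have hTcard : T.card ≤ 4 + 4 := by
    have himage : (Finset.univ.image (affineDickson (R := RFF K (Fin 8)) 𝐱)).card ≤ 3 :=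
      Finset.card_image_le
    exact (Finset.card_union_le _ _).trans <|
      add_le_add ((Finset.card_insert_le _ _).trans (Nat.succ_le_succ himage)) hcard
  have hTfix : ∀ t ∈ T, ∀ g ∈ G48, permHom K (Fin 8) g t = t := by
    intro t ht g hg
    rcases Finset.mem_union.mp ht with ht | ht
    · rcases Finset.mem_insert.mp ht with rfl | ht
      · exact permHom_sum g
      · obtain ⟨j, -, rfl⟩ := Finset.mem_image.mp ht
        exact permHom_affineDickson hg j
    · exact hfix t ht g hg
  obtain ⟨t, hforms, hrank⟩ := relrank_sup_adjoin_le_of_artinSchreier (A := A)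
    (mem (a := ∑ i, 𝐱 i) (by simp [T])) (coordForm 𝐱)
    fun j => mem (a := affineDickson 𝐱 j) (by simp [T])
  have hA : A ⊔ adjoin K t = ⊤ := by
    rw [eq_top_iff, ← htop, formField, ← adjoin_union, adjoin_le_iff]
    rintro a ((rfl | ha) | ha)
    · exact le_sup_left (a := A) (mem (by simp [T]))
    · exact le_sup_right (a := A) (subset_adjoin K t (hforms ha))
    · exact le_sup_left (a := A) (mem (Finset.mem_union_right _ ha))
  rw [hA] at hrank
  exact isRatExt_fixedSub_of_relrank_le (hTcard.trans_eq (by simp)) hTfix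
    (hrank.trans (by exact_mod_cast le_card))

end G48

end CharTwo

section CharZero

namespace G48

/-- The characters of `𝔽₂³`, whose points are numbered in binary; the character with number `a`
is `i ↦ (-1)^(a ⬝ i)`. -/
def character (a i : Fin 8) : ℤ :=
  ∏ j : Fin 3, if (a : ℕ).testBit j ∧ (i : ℕ).testBit j then -1 else 1

theorem sum_character_mul_character :
    ∀ i j, ∑ a, character a j * character a i = if j = i then 8 else 0 := by decide +kernel

/-- The lines of the Fano plane: for `b ≠ 0`, the three nontrivial characters that vanish on `b`.
All nontrivial characters make up `line 0`. -/
def line (b : Fin 8) : Finset (Fin 8) := {a | a ≠ 0 ∧ character a b = 1}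

theorem line_eq : line = ![{1, 2, 3, 4, 5, 6, 7}, {2, 4, 6}, {1, 4, 5}, {3, 4, 7}, {1, 2, 3},
    {2, 5, 7}, {1, 6, 7}, {3, 5, 6}] := by
  decide +kernel

theorem prod_line_character : ∀ b j, ∏ a ∈ line b, character a j = 1 := by decide +kernel

section CommRing

variable {R : Type*} [CommRing R] (x : Fin 8 → R)

/-- The eigenvectors of the translations in the permutation representation. -/
def characterSum (a : Fin 8) : R := ∑ i, character a i * x i

theorem sum_character_mul_characterSum (i : Fin 8) :
    ∑ a, character a i * characterSum x a = 8 * x i := by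
  have horth (j : Fin 8) : ∑ a, (character a i * character a j : R) = if i = j then 8 else 0 := by
    exact_mod_cast congrArg (Int.cast : ℤ → R) (sum_character_mul_character j i)
  simp only [characterSum, Finset.mul_sum, ← mul_assoc]
  rw [Finset.sum_comm]
  simp [← Finset.sum_mul, horth]

/-- Monomials in the `characterSum`s that the translations fix. The power of the factor with
number `0`, which all of `G₄₈` fixes, makes them generate the field of invariants of the
translations. -/
def lineMonomial (b : Fin 8) : R :=
  characterSum x 0 ^ (if b = 0 then 2 else 1) * ∏ a ∈ line b, characterSum x a

theorem lineMonomial_comp_of_character_eq_mul {g : Equiv.Perm (Fin 8)} {v : Fin 8}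
    (hg : ∀ a i, character a i = character a v * character a (g i)) (b : Fin 8) :
    lineMonomial (x ∘ g) b = lineMonomial x b := by
  have hsum (a : Fin 8) : characterSum (x ∘ g) a = character a v * characterSum x a := by
    simp only [characterSum, Finset.mul_sum, ← mul_assoc, ← Int.cast_mul]
    rw [← Equiv.sum_comp g fun i => ((character a v * character a i : ℤ) : R) * x i]
    exact Finset.sum_congr rfl fun i _ => by rw [hg a i, Function.comp_apply]
  have h0 : ∀ v, character 0 v = 1 := by decide +kernel
  simp only [lineMonomial, hsum, Finset.prod_mul_distrib, ← Int.cast_prod, prod_line_character, h0,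
    Int.cast_one, one_mul]

theorem lineMonomial_comp_of_dual {g δ : Equiv.Perm (Fin 8)} (hg0 : g 0 = 0) (hδ0 : δ 0 = 0)
    (hδ : ∀ a i, character (δ a) (g i) = character a i) (b : Fin 8) :
    lineMonomial (x ∘ g) b = lineMonomial x (g b) := by
  have hsum (a : Fin 8) : characterSum (x ∘ g) a = characterSum x (δ a) := by
    simp only [characterSum, ← hδ a]
    exact Equiv.sum_comp g fun i => (character (δ a) i : R) * x i
  have hgb : g b = 0 ↔ b = 0 := by rw [← g.eq_symm_apply, g.symm_apply_eq.mpr hg0.symm]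
  have hprod : ∏ a ∈ line b, characterSum x (δ a) = ∏ a ∈ line (g b), characterSum x a := by
    refine Finset.prod_equiv δ (fun a => ?_) fun a _ => rfl
    simp [line, hδ, ← δ.eq_symm_apply, δ.symm_apply_eq.mpr hδ0.symm]
  simp only [lineMonomial, hsum, hδ0, hprod, hgb]

theorem lineMonomial_comp {g : Equiv.Perm (Fin 8)} (hg : g ∈ linear) (b : Fin 8) :
    lineMonomial (x ∘ g) b = lineMonomial x (g b) := by
  induction hg using Subgroup.closure_induction generalizing x b with
  | mem g hg =>
    rcases hg with rfl | rfl | rfl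
    · exact lineMonomial_comp_of_dual x (g := θ) (δ := ⟨![0, 7, 5, 2, 1, 6, 4, 3],
        ![0, 4, 3, 7, 6, 2, 5, 1], by decide, by decide⟩) rfl rfl (by decide +kernel) b
    · exact lineMonomial_comp_of_dual x (g := φ₁) (δ := ⟨![0, 7, 1, 6, 4, 3, 5, 2],
        ![0, 2, 7, 5, 4, 6, 3, 1], by decide, by decide⟩) rfl rfl (by decide +kernel) b
    · exact lineMonomial_comp_of_dual x (g := φ₂) (δ := φ₂) rfl rfl (by decide +kernel) b
  | one => rfl
  | mul g h _ _ hg hh => exact (hh (x ∘ g) b).trans (hg x (h b))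
  | inv g _ hg =>
    have := hg (x ∘ ⇑g⁻¹) (g⁻¹ b)
    rwa [Function.comp_assoc, ← Equiv.Perm.coe_mul, inv_mul_cancel, Equiv.Perm.coe_one,
      Function.comp_id, ← Equiv.Perm.mul_apply, mul_inv_cancel, Equiv.Perm.one_apply,
      eq_comm] at this

theorem map_lineMonomial {S F : Type*} [CommRing S] [FunLike F R S] [RingHomClass F R S] (f : F)
    (b : Fin 8) : f (lineMonomial x b) = lineMonomial (f ∘ x) b := by
  simp only [lineMonomial, characterSum, map_mul, map_pow, map_prod, map_sum, map_intCast,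
    Function.comp_apply]

end CommRing

section Field

variable {K L : Type*} [Field K] [Field L] [Algebra K L] {A : IntermediateField K L}

theorem characterSum_zero_mem {x : Fin 8 → L} (hx : ∀ a, characterSum x a ≠ 0)
    (h : ∀ b, lineMonomial x b ∈ A) : characterSum x 0 ∈ A := by
  have key : (∏ b ∈ {0}ᶜ, lineMonomial x b) / lineMonomial x 0 ^ 3 = characterSum x 0 := by
    have hcompl : ({0}ᶜ : Finset (Fin 8)) = {1, 2, 3, 4, 5, 6, 7} := by decide
    simp [hcompl, lineMonomial, line_eq]
    field [hx]
  rw [← key]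
  exact div_mem (prod_mem fun b _ => h b) (pow_mem (h 0) 3)

theorem relrank_sup_adjoin_le_of_prod_line_mem {y : Fin 8 → L} (hy : ∀ a, y a ≠ 0)
    (h : ∀ b, ∏ a ∈ line b, y a ∈ A) :
    ∃ t : Set L, (∀ a ≠ 0, y a ∈ A ⊔ adjoin K t) ∧ relrank A (A ⊔ adjoin K t) ≤ (8 : ℕ) := by
  have sq_mem : ∀ a ∈ ({1, 2, 4} : Finset (Fin 8)), y a ^ 2 ∈ A := by
    intro a ha
    have key : (∏ b ∈ line a, ∏ c ∈ line b, y c) / ∏ c ∈ line 0, y c = y a ^ 2 := by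
      fin_cases ha <;> simp [line_eq] <;> field [hy]
    rw [← key]
    exact div_mem (prod_mem fun b _ => h b) (h 0)
  have adjoin_sqrt {s : Set L} {m : ℕ} (hm : relrank A (A ⊔ adjoin K s) ≤ m) (a : Fin 8)
      (ha : y a ^ 2 ∈ A) : relrank A (A ⊔ adjoin K (insert (y a) s)) ≤ (m * 2 : ℕ) :=
    relrank_sup_adjoin_insert_le hm (c := ![y a ^ 2, 0])
      (by simp [Fin.forall_fin_two, le_sup_left (a := A) ha]) (by simp)
  have h1 := adjoin_sqrt (s := ∅) (m := 1) (by simp) 1 (sq_mem 1 (by simp))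
  have h12 := adjoin_sqrt h1 2 (sq_mem 2 (by simp))
  refine ⟨_, ?_, adjoin_sqrt h12 4 (sq_mem 4 (by simp))⟩
  set B := A ⊔ adjoin K (insert (y 4) (insert (y 2) (insert (y 1) ∅)))
  have mem_of_mem {a} (ha : a ∈ insert (y 4) (insert (y 2) (insert (y 1) ∅))) : a ∈ B :=
    le_sup_right (a := A) (subset_adjoin K _ ha)
  have h (b : Fin 8) : ∏ a ∈ line b, y a ∈ B := le_sup_left (a := A) (h b)
  have m1 : y 1 ∈ B := mem_of_mem (by simp)
  have m2 : y 2 ∈ B := mem_of_mem (by simp)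
  have m4 : y 4 ∈ B := mem_of_mem (by simp)
  have third {b a a' : Fin 8} (ha : y a ∈ B) (ha' : y a' ∈ B) {c : Fin 8}
      (hc : ∏ a ∈ line b, y a = y a * y a' * y c) : y c ∈ B := by
    rw [← mul_div_cancel_left₀ (y c) (mul_ne_zero (hy a) (hy a')), ← hc]
    exact div_mem (h b) (mul_mem ha ha')
  have m3 : y 3 ∈ B := third (b := 4) m1 m2 (by simp [line_eq]; ring)
  have m5 : y 5 ∈ B := third (b := 2) m1 m4 (by simp [line_eq]; ring)
  have m6 : y 6 ∈ B := third (b := 1) m2 m4 (by simp [line_eq]; ring)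
  have m7 : y 7 ∈ B := third (b := 3) m3 m4 (by simp [line_eq]; ring)
  intro a ha
  fin_cases a
  exacts [absurd rfl ha, m1, m2, m3, m4, m5, m6, m7]

end Field

section Monomials

variable {K : Type} [Field K]

local notation "𝐱" => Xvar K (Fin 8)

variable (K) in
/-- The field generated by the `lineMonomial`s, which is the field of invariants of the
translations. -/
def monomialField : IntermediateField K (RFF K (Fin 8)) := adjoin K (Set.range (lineMonomial 𝐱))

theorem lineMonomial_mem_monomialField (b : Fin 8) : lineMonomial 𝐱 b ∈ monomialField K :=
  subset_adjoin K _ ⟨b, rfl⟩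

theorem permHom_lineMonomial {g : Equiv.Perm (Fin 8)} (hg : g ∈ linear) (b : Fin 8) :
    permHom K (Fin 8) g (lineMonomial 𝐱 b) = lineMonomial 𝐱 (g b) := by
  rw [map_lineMonomial, coe_permHom_comp_Xvar, lineMonomial_comp 𝐱 hg]

theorem permHom_eq_self_of_mem_monomialField {g : Equiv.Perm (Fin 8)}
    (hg : g ∈ ({σ₁, σ₂, κ} : Set _)) {a : RFF K (Fin 8)} (ha : a ∈ monomialField K) :
    permHom K (Fin 8) g a = a := by
  obtain ⟨v, hv⟩ : ∃ v, ∀ a i, character a i = character a v * character a (g i) := by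
    rcases hg with rfl | rfl | rfl
    exacts [⟨1, by decide +kernel⟩, ⟨2, by decide +kernel⟩, ⟨4, by decide +kernel⟩]
  induction ha using adjoin_induction with
  | mem a ha =>
    obtain ⟨b, rfl⟩ := ha
    rw [map_lineMonomial, coe_permHom_comp_Xvar, lineMonomial_comp_of_character_eq_mul 𝐱 hv]
  | algebraMap r => exact AlgEquiv.commutes _ r
  | add a b _ _ ha hb => rw [map_add, ha, hb]
  | inv a _ ha => rw [map_inv₀, ha]
  | mul a b _ _ ha hb => rw [map_mul, ha, hb]

variable [CharZero K]

theorem characterSum_Xvar_ne_zero (a : Fin 8) : characterSum 𝐱 a ≠ 0 := by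
  intro h
  have := Fintype.linearIndependent_iff.mp isTranscendenceBasis_Xvar.1.linearIndependent
    (fun i => (character a i : K)) (by simpa [characterSum, Algebra.smul_def] using h) 0
  have h1 : ∀ a, character a 0 = 1 := by decide +kernel
  simp [h1] at this

theorem relrank_top_le_of_monomialField_le {A : IntermediateField K (RFF K (Fin 8))}
    (hA : monomialField K ≤ A) : relrank A ⊤ ≤ (8 : ℕ) := by
  have : CharZero (RFF K (Fin 8)) := charZero_of_injective_algebraMap (algebraMap K _).injective
  have hne := characterSum_Xvar_ne_zero (K := K)
  have mem (b : Fin 8) : lineMonomial 𝐱 b ∈ A := hA (lineMonomial_mem_monomialField b)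
  have h0 := characterSum_zero_mem hne mem
  obtain ⟨t, ht, hrank⟩ := relrank_sup_adjoin_le_of_prod_line_mem hne fun b => by
    rw [← mul_div_cancel_left₀ (∏ a ∈ line b, characterSum 𝐱 a) (pow_ne_zero _ (hne 0))]
    exact div_mem (mem b) (pow_mem h0 _)
  suffices htop : A ⊔ adjoin K t = ⊤ by rwa [htop] at hrank
  have hsum (a : Fin 8) : characterSum 𝐱 a ∈ A ⊔ adjoin K t := by
    rcases eq_or_ne a 0 with rfl | ha
    exacts [le_sup_left (a := A) h0, ht a ha]
  rw [eq_top_iff, ← adjoin_range_Xvar, adjoin_le_iff]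
  rintro _ ⟨i, rfl⟩
  rw [← mul_div_cancel_left₀ (𝐱 i) (OfNat.ofNat_ne_zero 8), ← sum_character_mul_characterSum]
  exact div_mem (sum_mem fun a _ => mul_mem (intCast_mem _ _) (hsum a)) (ofNat_mem _ 8)

theorem algebraicIndependent_of_monomialField_le {J : Type*} [Fintype J]
    {t : J → RFF K (Fin 8)} (hJ : Fintype.card J = 8)
    (ht : monomialField K ≤ adjoin K (Set.range t)) : AlgebraicIndependent K t :=
  algebraicIndependent_of_relrank_adjoin_le (by simp [trdeg_RFF, hJ])
    (relrank_top_le_of_monomialField_le ht)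

theorem algebraicIndependent_lineMonomial : AlgebraicIndependent K (lineMonomial 𝐱) :=
  algebraicIndependent_of_monomialField_le (Fintype.card_fin 8) le_rfl

end Monomials

section KleinGroup

section CommRing

variable {R : Type*} [CommRing R]

/-- The symmetric matrices of seven ternary quadratic forms that Klein's group of order 168
permutes like the points of the Fano plane when `β ^ 2 = β - 2`; `quadric β 0` is a dummy. -/
def quadric (β : R) : Fin 8 → Matrix (Fin 3) (Fin 3) R :=
  ![0,
    !![-(2 * β + 2), 0, 0; 0, β, 4 - β; 0, 4 - β, β],
    !![β, 0, 4 - β; 0, -(2 * β + 2), 0; 4 - β, 0, β],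
    !![β, 4 - β, 0; 4 - β, β, 0; 0, 0, -(2 * β + 2)],
    !![β, -(4 - β), 0; -(4 - β), β, 0; 0, 0, -(2 * β + 2)],
    !![β, 0, -(4 - β); 0, -(2 * β + 2), 0; -(4 - β), 0, β],
    !![-(2 * β + 2), 0, 0; 0, β, -(4 - β); 0, -(4 - β), β],
    !![4, 0, 0; 0, 4, 0; 0, 0, 4]]

theorem map_quadric {S : Type*} [CommRing S] (f : R →+* S) (β : R) (b : Fin 8) :
    (quadric β b).map f = quadric (f β) b := by
  ext i j
  fin_cases b <;> fin_cases i <;> fin_cases j <;> simp [quadric, map_ofNat]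

theorem isSymm_quadric (β : R) (b : Fin 8) : (quadric β b).IsSymm := by
  refine Matrix.IsSymm.ext fun i j => ?_
  fin_cases b <;> fin_cases i <;> fin_cases j <;> rfl

end CommRing

variable {K : Type*} [Field K]

variable (β : K) in
/-- Klein's group, encoded as the permutations in `linear` together with their lifts to unimodular
substitutions that permute the quadrics accordingly. -/
def kleinGroup : Subgroup (Equiv.Perm (Fin 8) × (Matrix (Fin 3) (Fin 3) K)ˣ) where
  carrier := {p | p.1 ∈ linear ∧ p.2.val.det = 1 ∧
    ∀ b, p.2.valᵀ * quadric β (p.1 b) * p.2.val = quadric β b}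
  one_mem' := ⟨linear.one_mem, by simp, fun b => by simp⟩
  mul_mem' := by
    rintro ⟨g, M⟩ ⟨h, N⟩ ⟨hg, hM1, hM⟩ ⟨hh, hN1, hN⟩
    refine ⟨linear.mul_mem hg hh, by simp_all, fun b => ?_⟩
    calc (M * N).valᵀ * quadric β (g (h b)) * (M * N).val
        = N.valᵀ * (M.valᵀ * quadric β (g (h b)) * M.val) * N.val := by
          simp only [Units.val_mul, transpose_mul, Matrix.mul_assoc]
      _ = quadric β b := by rw [hM (h b), hN b]
  inv_mem' := by
    rintro ⟨g, M⟩ ⟨hg, hM1, hM⟩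
    refine ⟨linear.inv_mem hg, ?_, fun b => ?_⟩
    · simp [hM1]
    calc M⁻¹.valᵀ * quadric β (g⁻¹ b) * M⁻¹.val
        = M⁻¹.valᵀ * (M.valᵀ * quadric β (g (g⁻¹ b)) * M.val) * M⁻¹.val := by rw [hM (g⁻¹ b)]
      _ = (M.val * M⁻¹.val)ᵀ * quadric β ((g * g⁻¹) b) * (M.val * M⁻¹.val) := by
          simp only [transpose_mul, Matrix.mul_assoc, Equiv.Perm.mul_apply]
      _ = quadric β b := by
          rw [M.mul_inv, mul_inv_cancel, transpose_one, Matrix.one_mul, Matrix.mul_one,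
            Equiv.Perm.one_apply]

theorem exists_mem_kleinGroup_of_entries {β : K} {g : Equiv.Perm (Fin 8)} (hg : g ∈ linear)
    {M : Matrix (Fin 3) (Fin 3) K} (hdet : M.det = 1)
    (hM : ∀ b, ∀ i, ∀ j ≤ i, (Mᵀ * quadric β (g b) * M) i j = quadric β b i j) :
    ∃ N, N.val = M ∧ (g, N) ∈ kleinGroup β := by
  refine ⟨M.nonsingInvUnit (by simp [hdet]), rfl, hg, hdet, fun b => ?_⟩
  have hsymm : (Mᵀ * quadric β (g b) * M).IsSymm := by
    rw [IsSymm, transpose_mul, transpose_mul, transpose_transpose, isSymm_quadric, Matrix.mul_assoc]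
  ext i j
  rcases le_total j i with h | h
  · exact hM b i j h
  · rw [← isSymm_quadric β b, transpose_apply, ← hM b j i h]
    exact hsymm.apply j i

theorem exists_phi₁_mem_kleinGroup (β : K) :
    ∃ M, M.val = !![0, 0, 1; 1, 0, 0; 0, 1, 0] ∧ (φ₁, M) ∈ kleinGroup β := by
  refine exists_mem_kleinGroup_of_entries (Subgroup.subset_closure (by simp))
    (by simp [det_fin_three]) ?_
  rw [coe_φ₁]
  intro b i j _
  fin_cases b <;> fin_cases i <;> fin_cases j <;>
    simp [quadric, Matrix.mul_apply, Fin.sum_univ_three]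

variable [CharZero K] {β : K}

theorem exists_theta_mem_kleinGroup (hβ : β ^ 2 = β - 2) : ∃ M, (θ, M) ∈ kleinGroup β := by
  have : β ^ 3 = -β - 2 := by linear_combination (β + 1) * hβ
  refine (exists_mem_kleinGroup_of_entries (Subgroup.subset_closure (by simp))
    (M := !![-β / 2, 0, -β / 2; 1 / 2, (1 - β) / 2, -1 / 2; 1 / 2, (β - 1) / 2, -1 / 2])
    ?_ ?_).imp fun _ h => h.2
  · simp [det_fin_three]
    grind
  · intro b i j hij
    rw [coe_θ]
    simp only [Matrix.mul_apply, Fin.sum_univ_three, transpose_apply]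
    fin_cases b <;> fin_cases i <;> fin_cases j <;>
    first
      | exact absurd hij (by decide)
      | (simp [quadric] <;> grind)

theorem exists_mem_kleinGroup (hβ : β ^ 2 = β - 2) {g : Equiv.Perm (Fin 8)} (hg : g ∈ linear) :
    ∃ M, (g, M) ∈ kleinGroup β := by
  suffices h : linear ≤ (kleinGroup β).map (MonoidHom.fst _ _) by
    obtain ⟨⟨_, M⟩, hM, rfl⟩ := h hg
    exact ⟨M, hM⟩
  refine (Subgroup.closure_le _).mpr ?_
  rintro g (rfl | rfl | rfl)
  · obtain ⟨M, hM⟩ := exists_theta_mem_kleinGroup hβ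
    exact ⟨_, hM, rfl⟩
  · obtain ⟨M, -, hM⟩ := exists_phi₁_mem_kleinGroup β
    exact ⟨_, hM, rfl⟩
  · obtain ⟨M, -, hM⟩ := exists_mem_kleinGroup_of_entries (β := β) (g := φ₂)
      (Subgroup.subset_closure (by simp)) (M := !![0, -1, 0; -1, 0, 0; 0, 0, -1])
      (by simp [det_fin_three]) (by
        rw [coe_φ₂]
        intro b i j _
        fin_cases b <;> fin_cases i <;> fin_cases j <;>
          simp [quadric, Matrix.mul_apply, Fin.sum_univ_three])
    exact ⟨_, hM, rfl⟩

theorem eq_smul_one_of_forall_commute_quadric (hβ : β ^ 2 = β - 2) {M : Matrix (Fin 3) (Fin 3) K}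
    (hM : ∀ b, Commute (quadric β b) M) : ∃ r : K, M = r • 1 := by
  refine ⟨M 0 0, ?_⟩
  have entry (b i j) : (quadric β b * M) i j = (M * quadric β b) i j := by rw [hM b]
  simp only [Matrix.mul_apply, Fin.sum_univ_three] at entry
  ext i j
  have e1 := entry 1
  have e2 := entry 2
  have e5 := entry 5
  have e6 := entry 6
  simp [quadric, Fin.forall_fin_succ] at e1 e2 e5 e6
  fin_cases i <;> fin_cases j <;> simp <;> grind

theorem eq_one_of_one_mem_kleinGroup (hβ : β ^ 2 = β - 2) {M : (Matrix (Fin 3) (Fin 3) K)ˣ}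
    (hM : (1, M) ∈ kleinGroup β) : M = 1 := by
  have hquadric (b : Fin 8) : M.valᵀ * quadric β b * M.val = quadric β b := hM.2.2 b
  have h7 : quadric β 7 = (4 : K) • 1 := by
    ext i j
    fin_cases i <;> fin_cases j <;> simp [quadric]
  have horth : M.valᵀ * M.val = 1 := by
    have h := hquadric 7
    rw [h7, Matrix.mul_smul, Matrix.smul_mul, Matrix.mul_one] at h
    exact smul_right_injective _ (by norm_num : (4 : K) ≠ 0) h
  have hcomm (b : Fin 8) : Commute (quadric β b) M.val := by
    calc quadric β b * M.val = (M.val * M.valᵀ) * (quadric β b * M.val) := by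
          rw [mul_eq_one_comm.mp horth, Matrix.one_mul]
      _ = M.val * (M.valᵀ * quadric β b * M.val) := by simp only [Matrix.mul_assoc]
      _ = M.val * quadric β b := by rw [hquadric b]
  obtain ⟨r, hr⟩ := eq_smul_one_of_forall_commute_quadric hβ hcomm
  have hr2 : r ^ 2 = 1 := by
    simpa [hr, sq, smul_smul] using congrFun₂ horth 0 0
  have hr3 : r ^ 3 = 1 := by simpa [hr] using hM.2.1
  have hr1 : r = 1 := by linear_combination hr3 - r * hr2
  exact Units.ext (by rw [hr, hr1, one_smul, Units.val_one])

theorem eq_one_of_smul_one_mem_kleinGroup (hβ : β ^ 2 = β - 2) {g : Equiv.Perm (Fin 8)}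
    {M : (Matrix (Fin 3) (Fin 3) K)ˣ} (hg : (g, M) ∈ kleinGroup β) {r : K}
    (hr : M.val = r • 1) : g = 1 := by
  have hquadric (b : Fin 8) : r ^ 2 • quadric β (g b) = quadric β b := by
    rw [← hg.2.2 b, hr, sq, mul_smul]
    simp
  let code : Fin 8 → ℤ := ![0, 4, 2, 1, -1, -2, -4, 0]
  have hcode (b : Fin 8) : r ^ 2 * code (g b) = code b := by
    have code_eq (b : Fin 8) :
        quadric β b 0 1 + 2 * quadric β b 0 2 + 4 * quadric β b 1 2 = (4 - β) * code b := by
      fin_cases b <;> simp [quadric, code] <;> ring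
    have hne : 4 - β ≠ 0 := by grind
    apply mul_left_cancel₀ hne
    rw [← code_eq, ← hquadric b, mul_left_comm, ← code_eq]
    simp only [Matrix.smul_apply, smul_eq_mul]
    ring
  have hg0 : g 0 = 0 := apply_zero_of_mem_linear hg.1
  have hr0 : r ≠ 0 := by
    rintro rfl
    simpa [hr] using hg.2.1
  have code_zero : ∀ b, code b = 0 → b = 0 ∨ b = 7 := by decide
  have hg7 : g 7 = 7 := by
    have h : code (g 7) = 0 := by simpa [hr0, code] using hcode 7
    exact (code_zero _ h).resolve_left fun h => by simpa using g.injective (h.trans hg0.symm)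
  have hr2 : r ^ 2 = 1 := by simpa [hg7, quadric] using congrFun₂ (hquadric 7) 0 0
  have code_inj : ∀ b c, code b = code c → b = c ∨ b = 0 ∨ b = 7 := by decide
  ext1 b
  rcases code_inj b (g b) (by simpa [hr2, eq_comm] using hcode b) with h | rfl | rfl
  exacts [h.symm, hg0, hg7]

theorem finite_kleinGroup (hβ : β ^ 2 = β - 2) : Finite (kleinGroup β) := by
  refine Finite.of_injective ((MonoidHom.fst _ _).comp (kleinGroup β).subtype) ?_
  rw [injective_iff_map_eq_one]
  rintro ⟨⟨g, M⟩, hM⟩ (rfl : g = 1)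
  exact Subtype.ext (Prod.ext rfl (eq_one_of_one_mem_kleinGroup hβ hM))

end KleinGroup

section Invariants

section CommRing

variable {R S : Type*} [CommRing R] [CommRing S]

/-- The quadratic forms with matrices `quadric β b`. -/
def quadricForm (β : R) (v : Fin 3 → R) (b : Fin 8) : R := v ⬝ᵥ quadric β b *ᵥ v

theorem quadricForm_smul (β c : R) (v : Fin 3 → R) :
    quadricForm β (c • v) = c ^ 2 • quadricForm β v := by
  ext b
  simp only [quadricForm, mulVec_smul, smul_dotProduct, dotProduct_smul, Pi.smul_apply,
    smul_eq_mul, sq, mul_assoc]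

theorem quadricForm_mulVec {β : R} {M : Matrix (Fin 3) (Fin 3) R} {a b : Fin 8}
    (hM : Mᵀ * quadric β b * M = quadric β a) (v : Fin 3 → R) :
    quadricForm β (M *ᵥ v) b = quadricForm β v a := by
  simp only [quadricForm, ← hM, ← mulVec_mulVec, dotProduct_mulVec, vecMul_transpose]

theorem map_quadricForm (f : R →+* S) (β : R) (v : Fin 3 → R) (b : Fin 8) :
    f (quadricForm β v b) = quadricForm (f β) (f ∘ v) b := by
  simp only [quadricForm, RingHom.map_dotProduct, ← map_quadric]
  exact congrArg _ (funext fun i => RingHom.map_mulVec f (quadric β b) v i)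

variable {β x y z e₁ e₂ e₃ : R}

theorem sum_quadricForm_sq (hβ : β ^ 2 = β - 2)
    (h₁ : e₁ = x ^ 2 + y ^ 2 + z ^ 2) (h₂ : e₂ = x ^ 2 * y ^ 2 + y ^ 2 * z ^ 2 + z ^ 2 * x ^ 2) :
    ∑ b, quadricForm β ![x, y, z] b ^ 2 = 28 * β * e₁ ^ 2 + (168 - 140 * β) * e₂ := by
  simp [quadricForm, quadric, Fin.sum_univ_eight, Matrix.vecHead, Matrix.vecTail, h₁, h₂]
  linear_combination (12 * (x ^ 4 + y ^ 4 + z ^ 4) -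
    4 * (x ^ 2 * y ^ 2 + y ^ 2 * z ^ 2 + z ^ 2 * x ^ 2)) * hβ

theorem sum_quadricForm_cube (hβ : β ^ 2 = β - 2)
    (h₁ : e₁ = x ^ 2 + y ^ 2 + z ^ 2) (h₂ : e₂ = x ^ 2 * y ^ 2 + y ^ 2 * z ^ 2 + z ^ 2 * x ^ 2)
    (h₃ : e₃ = x ^ 2 * y ^ 2 * z ^ 2) :
    ∑ b, quadricForm β ![x, y, z] b ^ 3 = (168 - 84 * β) * e₁ ^ 3 +
      (-84 + 462 * β) * e₁ * e₂ + (-4116 - 882 * β) * e₃ := by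
  have : β ^ 3 = -β - 2 := by linear_combination (β + 1) * hβ
  simp [quadricForm, quadric, Fin.sum_univ_eight, Matrix.vecHead, Matrix.vecTail, h₁, h₂, h₃]
  grind

theorem prod_quadricForm (hβ : β ^ 2 = β - 2)
    (h₁ : e₁ = x ^ 2 + y ^ 2 + z ^ 2) (h₂ : e₂ = x ^ 2 * y ^ 2 + y ^ 2 * z ^ 2 + z ^ 2 * x ^ 2)
    (h₃ : e₃ = x ^ 2 * y ^ 2 * z ^ 2) :
    ∏ b ∈ {0}ᶜ, quadricForm β ![x, y, z] b =
      256 * e₁ ^ 7 + (4480 + 448 * β) * e₁ ^ 5 * e₂ + (-68600 + 10388 * β) * e₁ ^ 3 * e₂ ^ 2 +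
      (318304 - 32144 * β) * e₁ ^ 4 * e₃ + (186592 - 60368 * β) * e₁ * e₂ ^ 3 +
      (-1203440 + 165032 * β) * e₁ ^ 2 * e₂ * e₃ + (1720488 + 393764 * β) * e₁ * e₃ ^ 2 := by
  let q : R → R → R → R := fun a b c =>
    (12 * β - 4) * a ^ 2 + (-8 * β + 8) * a * (b + c) + (β - 2) * (b ^ 2 + c ^ 2) +
      (30 * β - 60) * (b * c)
  have hpair (x y z : R) :
      (-(2 * β + 2) * x ^ 2 + β * (y ^ 2 + z ^ 2) + 2 * (4 - β) * (y * z)) *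
        (-(2 * β + 2) * x ^ 2 + β * (y ^ 2 + z ^ 2) - 2 * (4 - β) * (y * z)) =
      q (x ^ 2) (y ^ 2) (z ^ 2) := by
    linear_combination (4 * x ^ 4 - 4 * x ^ 2 * (y ^ 2 + z ^ 2) + y ^ 4 + z ^ 4 -
      2 * (y ^ 2 * z ^ 2)) * hβ
  have hpairs : ∏ b ∈ {0}ᶜ, quadricForm β ![x, y, z] b =
      q (x ^ 2) (y ^ 2) (z ^ 2) * q (y ^ 2) (z ^ 2) (x ^ 2) * q (z ^ 2) (x ^ 2) (y ^ 2) *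
        (4 * (x ^ 2 + y ^ 2 + z ^ 2)) := by
    have hcompl : ({0}ᶜ : Finset (Fin 8)) = {1, 2, 3, 4, 5, 6, 7} := by decide
    simp only [← hpair, hcompl]
    simp [quadricForm, quadric, Matrix.vecHead, Matrix.vecTail]
    ring
  have : β ^ 3 = -β - 2 := by linear_combination (β + 1) * hβ
  rw [hpairs, h₁, h₂, h₃]
  simp only [q]
  generalize x ^ 2 = a, y ^ 2 = b, z ^ 2 = c
  grind

end CommRing

section Field

variable {K L : Type*} [Field K] [Field L] [Algebra K L]

/-- Invariants of degree zero, built from the values `y = quadricForm β v`, of the substitutions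
in `kleinGroup`. -/
def quadricRatios (y : Fin 8 → L) : Fin 2 → L :=
  ![(∑ b, y b ^ 3) ^ 2 / (∑ b, y b ^ 2) ^ 3,
    (∏ b ∈ {0}ᶜ, y b) / ((∑ b, y b ^ 2) ^ 2 * ∑ b, y b ^ 3)]

theorem quadricRatios_comp {g : Equiv.Perm (Fin 8)} (hg : g 0 = 0) (y : Fin 8 → L) :
    quadricRatios (y ∘ g) = quadricRatios y := by
  have hprod : ∏ b ∈ {0}ᶜ, y (g b) = ∏ b ∈ {0}ᶜ, y b := by
    refine Finset.prod_equiv g (fun b => ?_) fun b _ => rfl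
    simp [← g.eq_symm_apply, g.symm_apply_eq.mpr hg.symm]
  simp only [quadricRatios, Function.comp_apply, hprod, Equiv.sum_comp g fun b => y b ^ 2,
    Equiv.sum_comp g fun b => y b ^ 3]

theorem quadricRatios_smul {c : L} (hc : c ≠ 0) (y : Fin 8 → L) :
    quadricRatios (c • y) = quadricRatios y := by
  have hcompl : ({0}ᶜ : Finset (Fin 8)).card = 7 := by decide
  simp only [quadricRatios, Pi.smul_apply, smul_eq_mul, mul_pow, ← Finset.mul_sum,
    Finset.prod_mul_distrib, Finset.prod_const, hcompl]
  congr 1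
  · field_simp
  · congr 1
    field_simp

theorem map_quadricRatios {F : Type*} [FunLike F L L] [RingHomClass F L L] (f : F)
    (y : Fin 8 → L) : f ∘ quadricRatios y = quadricRatios (f ∘ y) := by
  ext i
  fin_cases i <;> simp [quadricRatios]

theorem exists_le_of_elementary_mem {A : IntermediateField K L} {x y e₁ e₂ e₃ : L}
    (h₁ : e₁ = x ^ 2 + y ^ 2 + 1) (h₂ : e₂ = x ^ 2 * y ^ 2 + y ^ 2 + x ^ 2)
    (h₃ : e₃ = x ^ 2 * y ^ 2) (hne : e₁ ≠ 0) (m₂ : e₂ / e₁ ^ 2 ∈ A) (m₃ : e₃ / e₁ ^ 3 ∈ A) :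
    ∃ B ≥ A, x ∈ B ∧ y ∈ B ∧ relrank A B ≤ (24 : ℕ) := by
  have mem_of_mem {s : Set L} {a : L} (ha : a ∈ s) : a ∈ A ⊔ adjoin K s :=
    le_sup_right (a := A) (subset_adjoin K s ha)
  have of_mem {s : Set L} {a : L} (ha : a ∈ A) : a ∈ A ⊔ adjoin K s := le_sup_left (a := A) ha
  set a := x ^ 2 / e₁ with ha
  set b := y ^ 2 / e₁ with hb
  have H₁ := relrank_sup_adjoin_insert_le (A := A) (s := ∅) (m := 1) (by simp)
    (a := a) (c := ![e₃ / e₁ ^ 3, -(e₂ / e₁ ^ 2), 1])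
    (by simp [Fin.forall_fin_succ, m₂, m₃])
    (by simp [Fin.sum_univ_three, ha]; field_simp; rw [h₁, h₂, h₃]; ring)
  have H₂ := relrank_sup_adjoin_insert_le H₁ (a := b)
    (c := ![a * (1 - a) - e₂ / e₁ ^ 2, 1 - a])
    (Fin.forall_fin_two.mpr ⟨sub_mem (mul_mem (mem_of_mem (by simp))
      (sub_mem (one_mem _) (mem_of_mem (by simp)))) (of_mem m₂),
      sub_mem (one_mem _) (mem_of_mem (by simp))⟩)
    (by simp [ha, hb]; field_simp; rw [h₁, h₂]; ring)
  have inv_mem_of_mem {B : IntermediateField K L} (haB : a ∈ B) (hbB : b ∈ B) : e₁ ∈ B := by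
    have hinv : (1 - a - b)⁻¹ = e₁ := by
      rw [inv_eq_iff_eq_inv, ha, hb]
      field_simp
      rw [h₁]
      ring
    rw [← hinv]
    exact inv_mem (sub_mem (sub_mem (one_mem _) haB) hbB)
  have sq_mem {s : Set L} (has : a ∈ s) (hbs : b ∈ s) :
      x ^ 2 ∈ A ⊔ adjoin K s ∧ y ^ 2 ∈ A ⊔ adjoin K s := by
    have he : e₁ ∈ A ⊔ adjoin K s := inv_mem_of_mem (mem_of_mem has) (mem_of_mem hbs)
    constructor
    · rw [← div_mul_cancel₀ (x ^ 2) hne]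
      exact mul_mem (mem_of_mem has) he
    · rw [← div_mul_cancel₀ (y ^ 2) hne]
      exact mul_mem (mem_of_mem hbs) he
  have H₃ := relrank_sup_adjoin_insert_le H₂ (a := x) (c := ![x ^ 2, 0])
    (Fin.forall_fin_two.mpr ⟨(sq_mem (by simp) (by simp)).1, zero_mem _⟩) (by simp)
  have H₄ := relrank_sup_adjoin_insert_le H₃ (a := y) (c := ![y ^ 2, 0])
    (Fin.forall_fin_two.mpr ⟨(sq_mem (by simp) (by simp)).2, zero_mem _⟩) (by simp)
  exact ⟨_, le_sup_left, mem_of_mem (by simp), mem_of_mem (by simp), H₄⟩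

end Field

end Invariants

section Elimination

variable {L : Type*} [Field L] [CharZero L] {β e₁ e₂ e₃ F₄ F₆ F₁₄ : L}

theorem elementary_two_div (hβ : β ^ 2 = β - 2) (he : e₁ ≠ 0)
    (h₄ : F₄ = 28 * β * e₁ ^ 2 + (168 - 140 * β) * e₂) :
    e₂ / e₁ ^ 2 = (1 + 5 * β) / 1568 * (F₄ / e₁ ^ 2 - 28 * β) := by
  field_simp
  linear_combination (-(1 + 5 * β)) * h₄ + 700 * e₂ * hβ

theorem elementary_three_div (hβ : β ^ 2 = β - 2) (he : e₁ ≠ 0)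
    (h₆ : F₆ = (168 - 84 * β) * e₁ ^ 3 + (-84 + 462 * β) * e₁ * e₂ + (-4116 - 882 * β) * e₃) :
    e₃ / e₁ ^ 3 = (17 - 3 * β) / 75264 *
      (168 - 84 * β + (-84 + 462 * β) * (e₂ / e₁ ^ 2) - F₆ / e₁ ^ 3) := by
  field_simp
  linear_combination (17 - 3 * β) * h₆ + 2646 * e₃ * hβ

theorem prod_eq_of_elementary (hβ : β ^ 2 = β - 2)
    (h₄ : F₄ = 28 * β * e₁ ^ 2 + (168 - 140 * β) * e₂)
    (h₆ : F₆ = (168 - 84 * β) * e₁ ^ 3 + (-84 + 462 * β) * e₁ * e₂ + (-4116 - 882 * β) * e₃)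
    (h₁₄ : F₁₄ = 256 * e₁ ^ 7 + (4480 + 448 * β) * e₁ ^ 5 * e₂ +
      (-68600 + 10388 * β) * e₁ ^ 3 * e₂ ^ 2 + (318304 - 32144 * β) * e₁ ^ 4 * e₃ +
      (186592 - 60368 * β) * e₁ * e₂ ^ 3 + (-1203440 + 165032 * β) * e₁ ^ 2 * e₂ * e₃ +
      (1720488 + 393764 * β) * e₁ * e₃ ^ 2) :
    F₁₄ = 16384 * e₁ ^ 7 - 512 * e₁ ^ 5 * F₄ + (40 / 7 - 4 * β / 7) * e₁ ^ 3 * F₄ ^ 2 -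
      256 / 3 * e₁ ^ 4 * F₆ + (-1 / 49 + β / 196) * e₁ * F₄ ^ 3 +
      (8 / 7 + 4 * β / 21) * e₁ ^ 2 * F₄ * F₆ + (2 / 21 - β / 63) * e₁ * F₆ ^ 2 := by
  have h3 : β ^ 3 = -β - 2 := by linear_combination (β + 1) * hβ
  have h4 : β ^ 4 = -3 * β + 2 := by linear_combination (β ^ 2 + β - 1) * hβ
  subst h₄ h₆ h₁₄
  field_simp
  ring_nf
  simp only [hβ, h3, h4]
  ring

theorem pow_seven_eq_of_prod_eq {p q k : L} (he : e₁ ≠ 0) (h4 : F₄ ≠ 0) (h6 : F₆ ≠ 0)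
    (h₁₄ : F₁₄ = 16384 * e₁ ^ 7 - 512 * e₁ ^ 5 * F₄ + (40 / 7 - 4 * β / 7) * e₁ ^ 3 * F₄ ^ 2 -
      256 / 3 * e₁ ^ 4 * F₆ + (-1 / 49 + β / 196) * e₁ * F₄ ^ 3 +
      (8 / 7 + 4 * β / 21) * e₁ ^ 2 * F₄ * F₆ + (2 / 21 - β / 63) * e₁ * F₆ ^ 2)
    (hp : p = F₆ ^ 2 / F₄ ^ 3) (hq : q = F₁₄ / (F₄ ^ 2 * F₆)) (hk : k = e₁ * F₄ / F₆) :
    16384 * p ^ 3 * k ^ 7 = q - (-1 / 49 + β / 196 + (2 / 21 - β / 63) * p) * k -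
      (8 / 7 + 4 * β / 21) * p * k ^ 2 - (40 / 7 - 4 * β / 7) * p * k ^ 3 +
      256 / 3 * p ^ 2 * k ^ 4 + 512 * p ^ 2 * k ^ 5 := by
  subst hp hq hk
  rw [h₁₄]
  field_simp
  ring

end Elimination

section Tower

variable {K L : Type*} [Field K] [Field L] [Algebra K L]

theorem div_pow_mem_of_mem {A : IntermediateField K L} {e₁ F₄ F₆ p k : L} (he : e₁ ≠ 0)
    (h4 : F₄ ≠ 0) (h6 : F₆ ≠ 0) (hp : p = F₆ ^ 2 / F₄ ^ 3) (hk : k = e₁ * F₄ / F₆) (mp : p ∈ A)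
    (mk : k ∈ A) : F₄ / e₁ ^ 2 ∈ A ∧ F₆ / e₁ ^ 3 ∈ A := by
  have h₄ : F₄ / e₁ ^ 2 = (p * k ^ 2)⁻¹ := by rw [hp, hk]; field_simp
  have h₆ : F₆ / e₁ ^ 3 = (p * k ^ 3)⁻¹ := by rw [hp, hk]; field_simp
  rw [h₄, h₆]
  exact ⟨inv_mem (mul_mem mp (pow_mem mk 2)), inv_mem (mul_mem mp (pow_mem mk 3))⟩

variable [CharZero L]

theorem elementary_mem_of_sum_mem {A : IntermediateField K L} {β : K} (hβ : β ^ 2 = β - 2)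
    {e₁ e₂ e₃ F₄ F₆ : L} (he : e₁ ≠ 0) (m₄ : F₄ / e₁ ^ 2 ∈ A) (m₆ : F₆ / e₁ ^ 3 ∈ A)
    (h₄ : F₄ = 28 * algebraMap K L β * e₁ ^ 2 + (168 - 140 * algebraMap K L β) * e₂)
    (h₆ : F₆ = (168 - 84 * algebraMap K L β) * e₁ ^ 3 +
      (-84 + 462 * algebraMap K L β) * e₁ * e₂ + (-4116 - 882 * algebraMap K L β) * e₃) :
    e₂ / e₁ ^ 2 ∈ A ∧ e₃ / e₁ ^ 3 ∈ A := by
  have hβL : algebraMap K L β ^ 2 = algebraMap K L β - 2 := by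
    rw [← map_pow, hβ, map_sub, map_ofNat]
  have m₂ : e₂ / e₁ ^ 2 ∈ A := by
    rw [elementary_two_div hβL he h₄]
    exact (((1 + 5 * algebraMap K A β) / 1568 * (⟨_, m₄⟩ - 28 * algebraMap K A β) : A)).2
  refine ⟨m₂, ?_⟩
  rw [elementary_three_div hβL he h₆]
  exact (((17 - 3 * algebraMap K A β) / 75264 * (168 - 84 * algebraMap K A β +
    (-84 + 462 * algebraMap K A β) * ⟨_, m₂⟩ - ⟨_, m₆⟩) : A)).2

theorem relrank_sup_adjoin_le_seven {A : IntermediateField K L} {β : K} {p q k : L} (mp : p ∈ A)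
    (mq : q ∈ A) (hp : p ≠ 0) (hk : 16384 * p ^ 3 * k ^ 7 = q -
      (-1 / 49 + algebraMap K L β / 196 + (2 / 21 - algebraMap K L β / 63) * p) * k -
      (8 / 7 + 4 * algebraMap K L β / 21) * p * k ^ 2 -
      (40 / 7 - 4 * algebraMap K L β / 7) * p * k ^ 3 +
      256 / 3 * p ^ 2 * k ^ 4 + 512 * p ^ 2 * k ^ 5) :
    relrank A (A ⊔ adjoin K {k}) ≤ (7 : ℕ) := by
  lift p to A using mp
  lift q to A using mq
  let β' := algebraMap K A β
  let c : Fin 7 → A := ![q, -(-1 / 49 + β' / 196 + (2 / 21 - β' / 63) * p),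
    -((8 / 7 + 4 * β' / 21) * p), -((40 / 7 - 4 * β' / 7) * p), 256 / 3 * p ^ 2, 512 * p ^ 2, 0]
  have hc (i : Fin 7) : ((c i / (16384 * p ^ 3) : A) : L) ∈ A ⊔ adjoin K ∅ :=
    le_sup_left (a := A) (SetLike.coe_mem _)
  rw [← insert_empty_eq]
  refine relrank_sup_adjoin_insert_le (m := 1) (by simp) hc ?_
  have hne : 16384 * (p : L) ^ 3 ≠ 0 := mul_ne_zero (by norm_num) (pow_ne_zero 3 hp)
  apply mul_left_cancel₀ hne
  have coe_ofNat (n : ℕ) [n.AtLeastTwo] : ((ofNat(n) : A) : L) = ofNat(n) := rfl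
  simp [hk, Fin.sum_univ_seven, c, β', coe_ofNat]
  field

/-- The tower `A ⊆ A(k) ⊆ A(k, x, y)` has steps of degrees at most 7 and 24. -/
theorem exists_le_of_quadricRatios_mem {A : IntermediateField K L} {β : K} (hβ : β ^ 2 = β - 2)
    {x y : L} (hA : ∀ i, quadricRatios (quadricForm (algebraMap K L β) ![x, y, 1]) i ∈ A)
    (he : x ^ 2 + y ^ 2 + 1 ≠ 0)
    (h4 : ∑ b, quadricForm (algebraMap K L β) ![x, y, 1] b ^ 2 ≠ 0)
    (h6 : ∑ b, quadricForm (algebraMap K L β) ![x, y, 1] b ^ 3 ≠ 0) :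
    ∃ B ≥ A, x ∈ B ∧ y ∈ B ∧ relrank A B ≤ (168 : ℕ) := by
  have hβL : algebraMap K L β ^ 2 = algebraMap K L β - 2 := by
    rw [← map_pow, hβ, map_sub, map_ofNat]
  obtain ⟨e₁, h₁⟩ : ∃ e₁, e₁ = x ^ 2 + y ^ 2 + 1 := ⟨_, rfl⟩
  obtain ⟨e₂, h₂⟩ : ∃ e₂, e₂ = x ^ 2 * y ^ 2 + y ^ 2 + x ^ 2 := ⟨_, rfl⟩
  obtain ⟨e₃, h₃⟩ : ∃ e₃, e₃ = x ^ 2 * y ^ 2 := ⟨_, rfl⟩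
  have h₄ := sum_quadricForm_sq (x := x) (y := y) (z := 1) (e₁ := e₁) (e₂ := e₂) hβL
    (by simp [h₁]) (by simp [h₂])
  have h₆ := sum_quadricForm_cube (x := x) (y := y) (z := 1) (e₁ := e₁) (e₂ := e₂) (e₃ := e₃) hβL
    (by simp [h₁]) (by simp [h₂]) (by simp [h₃])
  have h₁₄ := prod_eq_of_elementary hβL h₄ h₆ (prod_quadricForm (x := x) (y := y) (z := 1)
    (e₁ := e₁) (e₂ := e₂) (e₃ := e₃) hβL (by simp [h₁]) (by simp [h₂]) (by simp [h₃]))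
  rw [← h₁] at he
  obtain ⟨p, hp⟩ : ∃ p, p = quadricRatios (quadricForm (algebraMap K L β) ![x, y, 1]) 0 := ⟨_, rfl⟩
  obtain ⟨q, hq⟩ : ∃ q, q = quadricRatios (quadricForm (algebraMap K L β) ![x, y, 1]) 1 := ⟨_, rfl⟩
  have mp : p ∈ A := hp ▸ hA 0
  have mq : q ∈ A := hq ▸ hA 1
  simp only [quadricRatios, Matrix.cons_val] at hp hq
  generalize ∑ b, quadricForm (algebraMap K L β) ![x, y, 1] b ^ 2 = F₄ at *
  generalize ∑ b, quadricForm (algebraMap K L β) ![x, y, 1] b ^ 3 = F₆ at *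
  obtain ⟨k, hk⟩ : ∃ k, k = e₁ * F₄ / F₆ := ⟨_, rfl⟩
  have hk7 := pow_seven_eq_of_prod_eq he h4 h6 h₁₄ hp hq hk
  set A₁ := A ⊔ adjoin K {k}
  have mp₁ : p ∈ A₁ := le_sup_left (a := A) mp
  have mk₁ : k ∈ A₁ := le_sup_right (a := A) (mem_adjoin_simple_self K k)
  obtain ⟨m₄, m₆⟩ := div_pow_mem_of_mem he h4 h6 hp hk mp₁ mk₁
  obtain ⟨m₂, m₃⟩ := elementary_mem_of_sum_mem hβ he m₄ m₆ h₄ h₆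
  obtain ⟨B, hB, hx, hy, hrank⟩ := exists_le_of_elementary_mem h₁ h₂ h₃ he m₂ m₃
  refine ⟨B, le_sup_left.trans hB, hx, hy, ?_⟩
  have hp0 : p ≠ 0 := by rw [hp]; exact div_ne_zero (pow_ne_zero 2 h6) (pow_ne_zero 3 h4)
  rw [← relrank_mul_relrank (le_sup_left : A ≤ A₁) hB, show 168 = 7 * 24 from rfl, Nat.cast_mul]
  exact mul_le_mul' (relrank_sup_adjoin_le_seven mp mq hp0 hk7) hrank

end Tower

section GenericPoint

variable {K L : Type*} [Field K] [Field L] [Algebra K L] {x y : L}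

theorem eval_eq_zero_of_aeval_eq_zero (hxy : AlgebraicIndependent K ![x, y])
    {P : MvPolynomial (Fin 2) K} (hP : MvPolynomial.aeval ![x, y] P = 0) (a b : K) :
    MvPolynomial.eval ![a, b] P = 0 := by
  rw [hxy.eq_zero_of_aeval_eq_zero P hP, map_zero]

theorem sq_add_sq_add_one_ne_zero (hxy : AlgebraicIndependent K ![x, y]) :
    x ^ 2 + y ^ 2 + 1 ≠ 0 := by
  intro h
  have := eval_eq_zero_of_aeval_eq_zero hxy (P := .X 0 ^ 2 + .X 1 ^ 2 + 1) (by simpa using h) 0 0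
  simp at this

theorem map_quadricForm_affine {R S : Type*} [CommRing R] [CommRing S] (f : R →+* S) (β a b : R)
    (i : Fin 8) : f (quadricForm β ![a, b, 1] i) = quadricForm (f β) ![f a, f b, 1] i := by
  have hvec : f ∘ ![a, b, 1] = ![f a, f b, 1] := by
    ext j
    fin_cases j <;> simp
  rw [map_quadricForm, hvec]

theorem sum_quadricForm_pow_ne_zero {β : K} (hxy : AlgebraicIndependent K ![x, y]) {n : ℕ}
    (hn : ∑ b, quadricForm β ![0, 0, 1] b ^ n ≠ 0) :
    ∑ b, quadricForm (algebraMap K L β) ![x, y, 1] b ^ n ≠ 0 := by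
  intro h
  let P : MvPolynomial (Fin 2) K := ∑ b, quadricForm (.C β) ![.X 0, .X 1, 1] b ^ n
  have hP : MvPolynomial.aeval ![x, y] P = 0 := by
    rw [← AlgHom.coe_toRingHom, map_sum, ← h]
    simp_rw [map_pow, map_quadricForm_affine]
    simp
  refine hn ?_
  simpa [P, map_quadricForm_affine] using eval_eq_zero_of_aeval_eq_zero hxy hP 0 0

theorem eq_smul_one_of_mulVec_eq [CharZero K] (hxy : AlgebraicIndependent K ![x, y])
    {M : Matrix (Fin 3) (Fin 3) K} {c : L}
    (hM : M.map (algebraMap K L) *ᵥ ![x, y, 1] = c • ![x, y, 1]) : ∃ r : K, M = r • 1 := by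
  let row (i : Fin 3) : MvPolynomial (Fin 2) K := .C (M i 0) * .X 0 + .C (M i 1) * .X 1 + .C (M i 2)
  have aeval_row (i : Fin 3) : MvPolynomial.aeval ![x, y] (row i) = c * ![x, y, 1] i := by
    rw [← smul_eq_mul, ← Pi.smul_apply, ← hM]
    simp [row, Matrix.mulVec, dotProduct, Fin.sum_univ_three]
  have cross (j : Fin 2) (a b : K) :
      MvPolynomial.eval ![a, b] (row j.castSucc - .X j * row 2) = 0 := by
    refine eval_eq_zero_of_aeval_eq_zero hxy ?_ a b
    rw [map_sub, map_mul, aeval_row, aeval_row]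
    fin_cases j <;> simp [mul_comm]
  have cross₀ (a b : K) : M 0 0 * a + M 0 1 * b + M 0 2 = a * (M 2 0 * a + M 2 1 * b + M 2 2) := by
    simpa [row, sub_eq_zero] using cross 0 a b
  have cross₁ (a b : K) : M 1 0 * a + M 1 1 * b + M 1 2 = b * (M 2 0 * a + M 2 1 * b + M 2 2) := by
    simpa [row, sub_eq_zero] using cross 1 a b
  refine ⟨M 2 2, ?_⟩
  ext i j
  have := cross₀ 0 0
  have := cross₀ 1 0
  have := cross₀ (-1) 0
  have := cross₀ 0 1
  have := cross₁ 0 0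
  have := cross₁ 1 0
  have := cross₁ 0 1
  have := cross₁ 0 (-1)
  fin_cases i <;> fin_cases j <;> simp <;> grind

end GenericPoint

section LineRatio

variable {K : Type} [Field K]

local notation "𝐱" => Xvar K (Fin 8)

variable (K) in
/-- The `lineMonomial`s normalized to have sum `1`, which makes them homogeneous of degree `0`;
`lineRatio K 0` is a dummy. -/
def lineRatio (b : Fin 8) : RFF K (Fin 8) :=
  lineMonomial 𝐱 b / ∑ i : Fin 7, lineMonomial 𝐱 i.succ

variable (K) in
/-- The field generated by the `lineRatio`s with numbers other than `0`. -/
def ratioField : IntermediateField K (RFF K (Fin 8)) := adjoin K (lineRatio K '' {0}ᶜ)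

theorem lineRatio_mem_ratioField {b : Fin 8} (hb : b ≠ 0) : lineRatio K b ∈ ratioField K :=
  subset_adjoin K _ ⟨b, hb, rfl⟩

theorem permHom_sum_lineMonomial {g : Equiv.Perm (Fin 8)} (hg : g ∈ linear) :
    permHom K (Fin 8) g (∑ i : Fin 7, lineMonomial 𝐱 i.succ) =
      ∑ i : Fin 7, lineMonomial 𝐱 i.succ := by
  have hsum : ∑ i : Fin 7, lineMonomial 𝐱 i.succ = ∑ b, lineMonomial 𝐱 b - lineMonomial 𝐱 0 := by
    rw [Fin.sum_univ_succ (lineMonomial 𝐱), add_sub_cancel_left]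
  rw [hsum, map_sub, map_sum]
  simp only [permHom_lineMonomial hg, apply_zero_of_mem_linear hg]
  rw [Equiv.sum_comp g (lineMonomial 𝐱)]

theorem permHom_lineRatio {g : Equiv.Perm (Fin 8)} (hg : g ∈ linear) (b : Fin 8) :
    permHom K (Fin 8) g (lineRatio K b) = lineRatio K (g b) := by
  rw [lineRatio, map_div₀, permHom_lineMonomial hg, permHom_sum_lineMonomial hg, lineRatio]

theorem permHom_mem_ratioField {g : Equiv.Perm (Fin 8)} (hg : g ∈ linear) {a : RFF K (Fin 8)}
    (ha : a ∈ ratioField K) : permHom K (Fin 8) g a ∈ ratioField K := by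
  suffices h : ratioField K ≤ (ratioField K).comap (permHom K (Fin 8) g).toAlgHom from h ha
  rw [ratioField, adjoin_le_iff]
  rintro _ ⟨b, hb, rfl⟩
  have hgb : g b ≠ 0 := fun h => hb (g.injective (h.trans (apply_zero_of_mem_linear hg).symm))
  change permHom K (Fin 8) g (lineRatio K b) ∈ ratioField K
  rw [permHom_lineRatio hg]
  exact lineRatio_mem_ratioField hgb

theorem lineRatio_mem_monomialField (b : Fin 8) : lineRatio K b ∈ monomialField K :=
  div_mem (lineMonomial_mem_monomialField b)
    (sum_mem fun _ _ => lineMonomial_mem_monomialField _)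

theorem ratioField_le_monomialField : ratioField K ≤ monomialField K := by
  rw [ratioField, adjoin_le_iff]
  rintro _ ⟨b, -, rfl⟩
  exact lineRatio_mem_monomialField b

variable [CharZero K]

theorem sum_lineMonomial_ne_zero : ∑ i : Fin 7, lineMonomial 𝐱 i.succ ≠ 0 := by
  intro h
  have := Fintype.linearIndependent_iff.mp ((algebraicIndependent_lineMonomial (K := K)).comp _
    (Fin.succ_injective 7)).linearIndependent 1 (by simpa using h) 0
  simp at this

theorem sum_lineRatio : ∑ i : Fin 7, lineRatio K i.succ = 1 := by
  simp only [lineRatio]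
  rw [← Finset.sum_div, div_self sum_lineMonomial_ne_zero]

theorem lineRatio_injective : Function.Injective (lineRatio K) := fun _ _ h =>
  algebraicIndependent_lineMonomial.injective ((div_left_inj' sum_lineMonomial_ne_zero).mp h)

theorem eq_one_of_forall_mem_ratioField {g : Equiv.Perm (Fin 8)} (hg : g ∈ linear)
    (h : ∀ a ∈ ratioField K, permHom K (Fin 8) g a = a) : g = 1 := by
  ext1 b
  by_cases hb : b = 0
  · rw [hb, apply_zero_of_mem_linear hg, Equiv.Perm.one_apply]
  · exact lineRatio_injective
      ((permHom_lineRatio hg b).symm.trans (h _ (lineRatio_mem_ratioField hb)))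

theorem algebraicIndependent_of_monomialField_le_sup {x y : RFF K (Fin 8)}
    (h : monomialField K ≤ adjoin K {x, y} ⊔ ratioField K) :
    AlgebraicIndependent K ![x, y] := by
  -- Together with six of the `lineRatio`s these are eight generators.
  let t : Fin 2 ⊕ Fin 6 → RFF K (Fin 8) := Sum.elim ![x, y] fun i => lineRatio K i.castSucc.succ
  have mem (j) : t j ∈ adjoin K (Set.range t) := subset_adjoin K _ ⟨j, rfl⟩
  suffices ht : AlgebraicIndependent K t by
    exact ht.comp Sum.inl Sum.inl_injective
  refine algebraicIndependent_of_monomialField_le rfl (h.trans (sup_le ?_ ?_))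
  · rw [adjoin_le_iff]
    rintro _ (rfl | rfl)
    exacts [mem (.inl 0), mem (.inl 1)]
  have h7 : lineRatio K (Fin.last 6).succ ∈ adjoin K (Set.range t) := by
    have hsum := sum_lineRatio (K := K)
    rw [Fin.sum_univ_castSucc] at hsum
    rw [eq_sub_of_add_eq' hsum]
    exact sub_mem (one_mem _) (sum_mem fun i _ => mem (.inr i))
  rw [ratioField, adjoin_le_iff]
  rintro _ ⟨b, hb, rfl⟩
  cases b using Fin.cases with
  | zero => exact absurd rfl hb
  | succ i =>
    cases i using Fin.lastCases with
    | last => exact h7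
    | cast i => exact mem (.inr i)

end LineRatio

section Dehomogenization

variable {K L : Type*} [Field K] [Field L] [Algebra K L] {A : Fin 3 → L}

theorem eq_zero_of_cyclic_mulVec_eq {f : L ≃ₐ[K] L} {M : Matrix (Fin 3) (Fin 3) K}
    (hM : M = !![0, 0, 1; 1, 0, 0; 0, 1, 0])
    (h : M.map (algebraMap K L) *ᵥ (f ∘ A) = A) (h2 : A 2 = 0) : A = 0 := by
  have h0 : A 0 = 0 := by
    rw [← h]
    simp [hM, Matrix.mulVec, dotProduct, Fin.sum_univ_three, h2]
  have h1 : A 1 = 0 := by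
    rw [← h]
    simp [hM, Matrix.mulVec, dotProduct, Fin.sum_univ_three, h0]
  ext i
  fin_cases i
  exacts [h0, h1, h2]

theorem affine_eq_smul (hA : A 2 ≠ 0) : ![A 0 / A 2, A 1 / A 2, 1] = (A 2)⁻¹ • A := by
  ext i
  fin_cases i <;> simp [div_eq_inv_mul, hA]

theorem exists_mulVec_affine_eq_smul {f : L ≃ₐ[K] L} {M : Matrix (Fin 3) (Fin 3) K}
    (h : M.map (algebraMap K L) *ᵥ (f ∘ A) = A) (hA : A 2 ≠ 0) :
    ∃ c : L, c ≠ 0 ∧ M.map (algebraMap K L) *ᵥ (f ∘ ![A 0 / A 2, A 1 / A 2, 1]) =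
      c • ![A 0 / A 2, A 1 / A 2, 1] := by
  have hcomp : f ∘ ((A 2)⁻¹ • A) = (f (A 2))⁻¹ • f ∘ A := by
    ext i
    simp
  refine ⟨A 2 / f (A 2), div_ne_zero hA (by simpa using hA), ?_⟩
  rw [affine_eq_smul hA, hcomp, mulVec_smul, h, smul_smul, div_mul_eq_mul_div,
    mul_inv_cancel₀ hA, one_div]

theorem mem_adjoin_affine_sup_of_mem_span {F : IntermediateField K L} (hA : A 2 ≠ 0)
    (h1 : 1 ∈ Submodule.span F (Set.range A)) {w : L} (hw : w ∈ Submodule.span F (Set.range A)) :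
    w ∈ adjoin K {A 0 / A 2, A 1 / A 2} ⊔ F := by
  set B := adjoin K {A 0 / A 2, A 1 / A 2} ⊔ F
  have mem_adjoin {a} (ha : a ∈ ({A 0 / A 2, A 1 / A 2} : Set L)) : a ∈ B :=
    le_sup_left (a := adjoin K _) (subset_adjoin K _ ha)
  have hAB : LinearMap.mulLeft F (A 2)⁻¹ '' Set.range A ⊆ B := by
    rintro _ ⟨_, ⟨i, rfl⟩, rfl⟩
    rw [LinearMap.mulLeft_apply, inv_mul_eq_div]
    fin_cases i
    · exact mem_adjoin (.inl rfl)
    · exact mem_adjoin (.inr rfl)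
    · exact (div_self hA).symm ▸ one_mem B
  have smul_mem {a} (ha : a ∈ Submodule.span F (Set.range A)) : (A 2)⁻¹ * a ∈ B := by
    refine mem_of_mem_span_of_le le_sup_right hAB ?_
    rw [← Submodule.map_span]
    exact Submodule.mem_map_of_mem ha
  have hA2 : (A 2)⁻¹ ∈ B := by simpa using smul_mem h1
  rw [← mul_inv_cancel_left₀ hA w]
  exact mul_mem (by simpa using inv_mem hA2) (smul_mem hw)

end Dehomogenization

section Equivariance

variable {K L : Type*} [Field K] [Field L] [Algebra K L] {f : L ≃ₐ[K] L}
  {M : Matrix (Fin 3) (Fin 3) K} {c : L}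

theorem map_quadricRatios_eq_self {β : K} {g : Equiv.Perm (Fin 8)} (hg : g 0 = 0)
    (hM : ∀ b, Mᵀ * quadric β (g b) * M = quadric β b) {v : Fin 3 → L} (hc : c ≠ 0)
    (h : M.map (algebraMap K L) *ᵥ (f ∘ v) = c • v) (i : Fin 2) :
    f (quadricRatios (quadricForm (algebraMap K L β) v) i) =
      quadricRatios (quadricForm (algebraMap K L β) v) i := by
  have hMap (b : Fin 8) : (M.map (algebraMap K L))ᵀ * quadric (algebraMap K L β) (g b) *
      M.map (algebraMap K L) = quadric (algebraMap K L β) b := by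
    rw [← map_quadric, ← map_quadric, ← hM b, Matrix.map_mul, Matrix.map_mul, transpose_map]
  have hf : f ∘ quadricForm (algebraMap K L β) v =
      c ^ 2 • (quadricForm (algebraMap K L β) v ∘ g) := by
    ext b
    calc f (quadricForm (algebraMap K L β) v b)
      _ = quadricForm (f (algebraMap K L β)) (f ∘ v) b := map_quadricForm (f : L →+* L) _ v b
      _ = quadricForm (algebraMap K L β) (c • v) (g b) := by
        rw [f.commutes, ← h, quadricForm_mulVec (hMap b)]
      _ = (c ^ 2 • (quadricForm (algebraMap K L β) v ∘ g)) b := by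
        rw [quadricForm_smul]
        rfl
  have := congr_fun (map_quadricRatios f (quadricForm (algebraMap K L β) v)) i
  rwa [hf, quadricRatios_smul (pow_ne_zero 2 hc), quadricRatios_comp hg] at this

theorem map_mem_adjoin_of_mulVec_eq {x y : L} (hM : IsUnit M.det)
    (h : M.map (algebraMap K L) *ᵥ (f ∘ ![x, y, 1]) = c • ![x, y, 1]) {a : L}
    (ha : a ∈ adjoin K {x, y}) : f a ∈ adjoin K {x, y} := by
  have hx : x ∈ adjoin K {x, y} := subset_adjoin K _ (.inl rfl)
  have hy : y ∈ adjoin K {x, y} := subset_adjoin K _ (.inr rfl)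
  let d := M⁻¹.map (algebraMap K L) *ᵥ ![x, y, 1]
  have hd (i : Fin 3) : d i ∈ adjoin K {x, y} := by
    have hv (j : Fin 3) : ![x, y, 1] j ∈ adjoin K {x, y} := by
      fin_cases j
      exacts [hx, hy, one_mem _]
    change ∑ j, algebraMap K L (M⁻¹ i j) * ![x, y, 1] j ∈ adjoin K {x, y}
    exact sum_mem fun j _ => mul_mem ((adjoin K {x, y}).algebraMap_mem (M⁻¹ i j)) (hv j)
  have hfd : f ∘ ![x, y, 1] = c • d := by
    rw [← mulVec_smul, ← h, mulVec_mulVec, ← Matrix.map_mul, nonsing_inv_mul M hM,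
      Matrix.map_one _ (map_zero _) (map_one _), one_mulVec]
  have hc : c ∈ adjoin K {x, y} := by
    have h1 : 1 = c * d 2 := by simpa using congr_fun hfd 2
    rw [eq_inv_of_mul_eq_one_left h1.symm]
    exact inv_mem (hd 2)
  have hmem (i : Fin 3) : f (![x, y, 1] i) ∈ adjoin K {x, y} := by
    rw [← Function.comp_apply (f := f), hfd]
    exact mul_mem hc (hd i)
  suffices hle : adjoin K {x, y} ≤ (adjoin K {x, y}).comap f.toAlgHom from hle ha
  rw [adjoin_le_iff]
  rintro _ (rfl | rfl)
  exacts [hmem 0, hmem 1]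

end Equivariance

section KleinAction

variable {K : Type} [Field K] {β : K}

local notation "𝐱" => Xvar K (Fin 8)

/-- The action of `kleinGroup β` on the rational function field through the permutations of the
variables. -/
def kleinAction (β : K) : kleinGroup β →* (RFF K (Fin 8) ≃ₐ[K] RFF K (Fin 8)) :=
  (permHom K (Fin 8)).comp ((MonoidHom.fst _ _).comp (kleinGroup β).subtype)

/-- Permutations of the variables move the point `(x : y : 1)` of the projective plane in the
same way as the lifts of these permutations to `kleinGroup β`. -/
def IsKleinEquivariant (β : K) (x y : RFF K (Fin 8)) : Prop :=
  ∀ p ∈ kleinGroup β, ∃ c : RFF K (Fin 8), c ≠ 0 ∧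
    p.2.val.map (algebraMap K (RFF K (Fin 8))) *ᵥ (permHom K (Fin 8) p.1 ∘ ![x, y, 1]) =
      c • ![x, y, 1]

theorem IsKleinEquivariant.kleinAction_mem_adjoin {x y : RFF K (Fin 8)}
    (hxy : IsKleinEquivariant β x y) (p : kleinGroup β) {a : RFF K (Fin 8)}
    (ha : a ∈ adjoin K {x, y}) :
    kleinAction β p a ∈ adjoin K {x, y} := by
  obtain ⟨c, -, h⟩ := hxy p p.2
  exact map_mem_adjoin_of_mulVec_eq (f := permHom K (Fin 8) p.1.1) (by simp [p.2.2.1]) h ha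

variable [CharZero K]

theorem exists_vector_fixed_by_kleinGroup (hβ : β ^ 2 = β - 2) :
    ∃ A : Fin 3 → RFF K (Fin 8), (∀ p ∈ kleinGroup β,
      p.2.val.map (algebraMap K (RFF K (Fin 8))) *ᵥ (permHom K (Fin 8) p.1 ∘ A) = A) ∧
      (∀ i, A i ∈ monomialField K) ∧ 1 ∈ Submodule.span (ratioField K) (Set.range A) ∧
      lineMonomial 𝐱 0 ∈ Submodule.span (ratioField K) (Set.range A) ∧
      ∑ i : Fin 7, lineMonomial 𝐱 i.succ ∈ Submodule.span (ratioField K) (Set.range A) := by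
  have := finite_kleinGroup hβ
  let R : kleinGroup β →* Matrix (Fin 3) (Fin 3) K :=
    (Units.coeHom _).comp ((MonoidHom.snd _ _).comp (kleinGroup β).subtype)
  have hfaith (p : kleinGroup β) (hp : ∀ a ∈ ratioField K, kleinAction β p a = a) : p = 1 := by
    obtain ⟨⟨g, M⟩, hM⟩ := p
    obtain rfl : g = 1 := eq_one_of_forall_mem_ratioField hM.1 hp
    exact Subtype.ext (Prod.ext rfl (eq_one_of_one_mem_kleinGroup hβ hM))
  let w : Fin 3 → RFF K (Fin 8) := ![1, lineMonomial 𝐱 0, ∑ i : Fin 7, lineMonomial 𝐱 i.succ]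
  have hw (p : kleinGroup β) (i : Fin 3) : kleinAction β p (w i) = w i := by
    have h0 : permHom K (Fin 8) p.1.1 (lineMonomial 𝐱 0) = lineMonomial 𝐱 0 := by
      rw [permHom_lineMonomial p.2.1, apply_zero_of_mem_linear p.2.1]
    fin_cases i
    exacts [map_one (kleinAction β p), h0, permHom_sum_lineMonomial p.2.1]
  obtain ⟨A, hA, hAw, hwA⟩ := exists_equivariant_vector (ρ := kleinAction β) (F := ratioField K)
    (fun p _ ha => permHom_mem_ratioField p.2.1 ha) hfaith R hw
  refine ⟨A, fun p hp => hA ⟨p, hp⟩, fun i => ?_, hwA 0, hwA 1, hwA 2⟩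
  refine mem_of_mem_span_of_le ratioField_le_monomialField ?_ (hAw i)
  have hsum : ∑ i : Fin 7, lineMonomial 𝐱 i.succ ∈ monomialField K :=
    sum_mem fun _ _ => lineMonomial_mem_monomialField _
  rintro _ ⟨j, rfl⟩
  fin_cases j
  exacts [one_mem _, lineMonomial_mem_monomialField 0, hsum]

theorem exists_isKleinEquivariant (hβ : β ^ 2 = β - 2) :
    ∃ x ∈ monomialField K, ∃ y ∈ monomialField K, IsKleinEquivariant β x y ∧
      monomialField K ≤ adjoin K {x, y} ⊔ ratioField K := by
  obtain ⟨A, hA, hmem, h1, h0, hs⟩ := exists_vector_fixed_by_kleinGroup hβ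
  have hA2 : A 2 ≠ 0 := by
    intro h2
    obtain ⟨M, hM, hφ₁⟩ := exists_phi₁_mem_kleinGroup β
    have hA0 := eq_zero_of_cyclic_mulVec_eq (f := permHom K (Fin 8) φ₁) hM (hA (φ₁, M) hφ₁) h2
    simp [hA0] at h1
  refine ⟨A 0 / A 2, div_mem (hmem 0) (hmem 2), A 1 / A 2, div_mem (hmem 1) (hmem 2),
    fun p hp => exists_mulVec_affine_eq_smul (f := permHom K (Fin 8) p.1) (hA p hp) hA2, ?_⟩
  have hs := mem_adjoin_affine_sup_of_mem_span hA2 h1 hs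
  rw [monomialField, adjoin_le_iff]
  rintro _ ⟨b, rfl⟩
  by_cases hb : b = 0
  · exact hb ▸ mem_adjoin_affine_sup_of_mem_span hA2 h1 h0
  · rw [← div_mul_cancel₀ (lineMonomial 𝐱 b) sum_lineMonomial_ne_zero]
    exact mul_mem (le_sup_right (a := adjoin K _) (lineRatio_mem_ratioField hb)) hs

theorem IsKleinEquivariant.eq_one {x y : RFF K (Fin 8)} (hβ : β ^ 2 = β - 2)
    (hxy : IsKleinEquivariant β x y) (hind : AlgebraicIndependent K ![x, y]) {p : kleinGroup β}
    (hp : ∀ a ∈ adjoin K {x, y}, kleinAction β p a = a) : p = 1 := by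
  obtain ⟨c, -, h⟩ := hxy p p.2
  have hfix : permHom K (Fin 8) p.1.1 ∘ ![x, y, 1] = ![x, y, 1] := by
    ext i
    fin_cases i
    exacts [hp x (subset_adjoin K _ (.inl rfl)), hp y (subset_adjoin K _ (.inr rfl)),
      map_one (permHom K (Fin 8) p.1.1)]
  rw [hfix] at h
  obtain ⟨r, hr⟩ := eq_smul_one_of_mulVec_eq hind h
  obtain ⟨⟨g, M⟩, hM⟩ := p
  obtain rfl := eq_one_of_smul_one_mem_kleinGroup hβ hM hr
  exact Subtype.ext (Prod.ext rfl (eq_one_of_one_mem_kleinGroup hβ hM))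

theorem exists_kleinGroup_invariants {x y : RFF K (Fin 8)} (hβ : β ^ 2 = β - 2)
    (hxy : IsKleinEquivariant β x y) (hind : AlgebraicIndependent K ![x, y]) :
    ∃ S : Finset (RFF K (Fin 8)), S.card ≤ 6 ∧ (∀ s ∈ S, ∀ p, kleinAction β p s = s) ∧
      (S : Set (RFF K (Fin 8))) ⊆ (adjoin K {x, y} ⊔ ratioField K : IntermediateField K _) ∧
      ratioField K ≤ adjoin K {x, y} ⊔ adjoin K (S : Set (RFF K (Fin 8))) := by
  have := finite_kleinGroup hβ
  have hw (p : kleinGroup β) (i : Fin 7) : kleinAction β p (lineRatio K i.succ) ∈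
      Submodule.span (adjoin K {x, y}) (Set.range fun i : Fin 7 => lineRatio K i.succ) := by
    have hgi : p.1.1 i.succ ≠ 0 := fun h =>
      Fin.succ_ne_zero i (p.1.1.injective (h.trans (apply_zero_of_mem_linear p.2.1).symm))
    obtain ⟨j, hj⟩ := Fin.exists_succ_eq.mpr hgi
    refine Submodule.subset_span ⟨j, ?_⟩
    exact (congrArg (lineRatio K) hj).trans (permHom_lineRatio p.2.1 i.succ).symm
  have h1 : (1 : RFF K (Fin 8)) ∈
      Submodule.span (adjoin K {x, y}) (Set.range fun i : Fin 7 => lineRatio K i.succ) := by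
    rw [← sum_lineRatio]
    exact sum_mem fun i _ => Submodule.subset_span ⟨i, rfl⟩
  obtain ⟨S, hcard, hS, hspan, hwS⟩ := exists_invariants_mem_sup_adjoin (ρ := kleinAction β)
    (fun p _ ha => hxy.kleinAction_mem_adjoin p ha) (fun p hp => hxy.eq_one hβ hind hp) hw h1
  refine ⟨S, hcard, hS, fun s hs => mem_of_mem_span_of_le le_sup_left ?_ (hspan s hs), ?_⟩
  · rintro _ ⟨i, rfl⟩
    exact le_sup_right (a := adjoin K _) (lineRatio_mem_ratioField (Fin.succ_ne_zero i))
  · rw [ratioField, adjoin_le_iff]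
    rintro _ ⟨b, hb, rfl⟩
    obtain ⟨i, rfl⟩ := Fin.exists_succ_eq.mpr hb
    exact hwS i

theorem permHom_eq_self_of_mem_G48 (hβ : β ^ 2 = β - 2) {a : RFF K (Fin 8)}
    (htrans : ∀ g ∈ ({σ₁, σ₂, κ} : Set _), permHom K (Fin 8) g a = a)
    (hklein : ∀ p : kleinGroup β, kleinAction β p a = a) {g : Equiv.Perm (Fin 8)} (hg : g ∈ G48) :
    permHom K (Fin 8) g a = a := by
  have hlinear {g : Equiv.Perm (Fin 8)} (hg : g ∈ linear) : permHom K (Fin 8) g a = a := by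
    obtain ⟨M, hM⟩ := exists_mem_kleinGroup hβ hg
    exact hklein ⟨(g, M), hM⟩
  refine permHom_apply_eq_self_of_mem_closure ?_ hg
  rintro g (rfl | rfl | rfl | rfl | rfl | rfl)
  · exact htrans _ (by simp)
  · exact htrans _ (by simp)
  · exact hlinear (Subgroup.subset_closure (by simp))
  · exact htrans _ (by simp)
  · exact hlinear (Subgroup.subset_closure (by simp))
  · exact hlinear (Subgroup.subset_closure (by simp))

theorem permHom_quadricRatios {x y : RFF K (Fin 8)} (hβ : β ^ 2 = β - 2) (hx : x ∈ monomialField K)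
    (hy : y ∈ monomialField K) (hxy : IsKleinEquivariant β x y) {g : Equiv.Perm (Fin 8)}
    (hg : g ∈ G48) (i : Fin 2) :
    permHom K (Fin 8) g
      (quadricRatios (quadricForm (algebraMap K (RFF K (Fin 8)) β) ![x, y, 1]) i) =
      quadricRatios (quadricForm (algebraMap K (RFF K (Fin 8)) β) ![x, y, 1]) i := by
  refine permHom_eq_self_of_mem_G48 hβ (fun g hg => ?_) (fun p => ?_) hg
  · have hfix : permHom K (Fin 8) g ∘ ![x, y, 1] = ![x, y, 1] := by
      ext j
      fin_cases j
      exacts [permHom_eq_self_of_mem_monomialField hg hx,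
        permHom_eq_self_of_mem_monomialField hg hy, map_one (permHom K (Fin 8) g)]
    exact map_quadricRatios_eq_self (f := permHom K (Fin 8) g) (g := 1) (M := 1) rfl (by simp)
      one_ne_zero (by rw [hfix]; simp) i
  · obtain ⟨c, hc, h⟩ := hxy p p.2
    exact map_quadricRatios_eq_self (f := permHom K (Fin 8) p.1.1) (g := p.1.1)
      (apply_zero_of_mem_linear p.2.1) p.2.2.2 hc h i

theorem exists_le_of_algebraicIndependent {x y : RFF K (Fin 8)} (hβ : β ^ 2 = β - 2)
    (hind : AlgebraicIndependent K ![x, y]) {A : IntermediateField K (RFF K (Fin 8))}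
    (hA : ∀ i, quadricRatios (quadricForm (algebraMap K (RFF K (Fin 8)) β) ![x, y, 1]) i ∈ A) :
    ∃ B ≥ A, x ∈ B ∧ y ∈ B ∧ relrank A B ≤ (168 : ℕ) := by
  have : CharZero (RFF K (Fin 8)) := charZero_of_injective_algebraMap (algebraMap K _).injective
  have hβ0 : β ≠ 0 := by
    rintro rfl
    norm_num at hβ
  have hsq : ∑ b, quadricForm β ![0, 0, 1] b ^ 2 ≠ 0 := by
    rw [sum_quadricForm_sq hβ rfl rfl]
    simpa using hβ0
  have hcube : ∑ b, quadricForm β ![0, 0, 1] b ^ 3 ≠ 0 := by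
    rw [sum_quadricForm_cube hβ rfl rfl rfl,
      show 168 - 84 * β = -84 * β ^ 2 by linear_combination 84 * hβ]
    simpa using hβ0
  exact exists_le_of_quadricRatios_mem hβ hA (sq_add_sq_add_one_ne_zero hind)
    (sum_quadricForm_pow_ne_zero hind hsq) (sum_quadricForm_pow_ne_zero hind hcube)

theorem isRatExt_fixedSub_of_charZero (hβ : β ^ 2 = β - 2) :
    IsRatExt K (fixedSub K (Fin 8) G48) := by
  classical
  obtain ⟨x, hx, y, hy, hxy, hgen⟩ := exists_isKleinEquivariant hβ
  have hind := algebraicIndependent_of_monomialField_le_sup hgen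
  obtain ⟨S, hcard, hS, hSmem, hSgen⟩ := exists_kleinGroup_invariants hβ hxy hind
  let r := quadricRatios (quadricForm (algebraMap K (RFF K (Fin 8)) β) ![x, y, 1])
  let T : Finset (RFF K (Fin 8)) := Finset.univ.image r ∪ S
  let A := adjoin K (T : Set (RFF K (Fin 8)))
  have hTcard : T.card ≤ 2 + 6 :=
    (Finset.card_union_le _ _).trans (add_le_add Finset.card_image_le hcard)
  have hle : adjoin K {x, y} ⊔ ratioField K ≤ monomialField K :=
    sup_le (adjoin_le_iff.mpr (by rintro _ (rfl | rfl) <;> assumption)) ratioField_le_monomialField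
  have hTfix : ∀ t ∈ T, ∀ g ∈ G48, permHom K (Fin 8) g t = t := by
    intro t ht g hg
    rcases Finset.mem_union.mp ht with ht | ht
    · obtain ⟨i, -, rfl⟩ := Finset.mem_image.mp ht
      exact permHom_quadricRatios hβ hx hy hxy hg i
    · exact permHom_eq_self_of_mem_G48 hβ
        (fun g hg => permHom_eq_self_of_mem_monomialField hg (hle (hSmem ht))) (hS t ht) hg
  obtain ⟨B, hAB, hxB, hyB, hrank⟩ := exists_le_of_algebraicIndependent (A := A) hβ hind
    fun i => subset_adjoin K _ (by simp [T, r])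
  have hB : monomialField K ≤ B := by
    have hxyB : adjoin K {x, y} ≤ B :=
      adjoin_le_iff.mpr (by rintro _ (rfl | rfl) <;> assumption)
    have hSB : adjoin K (S : Set (RFF K (Fin 8))) ≤ B :=
      (adjoin.mono K _ _ (by simp [T])).trans hAB
    exact hgen.trans (sup_le hxyB (hSgen.trans (sup_le hxyB hSB)))
  refine isRatExt_fixedSub_of_relrank_le (hTcard.trans_eq (by simp)) hTfix ?_
  calc relrank A ⊤
    _ = relrank A B * relrank B ⊤ := (relrank_mul_relrank hAB le_top).symm
    _ ≤ (168 : ℕ) * (8 : ℕ) := mul_le_mul' hrank (relrank_top_le_of_monomialField_le hB)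
    _ ≤ Nat.card G48 := by exact_mod_cast le_card

end KleinAction

end G48

end CharZero

/-- **Rationality for `G₄₈`.** Let `K` be a field with `char K = 2`, or containing
`ℚ(√−7)` (i.e. of characteristic zero in which `−7` is a square). The subgroup
`G₄₈ ⊆ S₈` of order 1344 generated by `σ₁ = (1,2)(3,4)(5,6)(7,8)`,
`σ₂ = (1,3)(2,4)(5,7)(6,8)`, `θ = (2,3,7,4,5,6,8)`, `κ = (1,5)(2,6)(3,7)(4,8)`,
`φ₁ = (2,3,4)(7,6,5)` and `φ₂ = (2,3)(7,6)` has `K`-rational fixed field. -/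
theorem rationality_G48 (K : Type) [Field K]
    (hK : ringChar K = 2 ∨ (CharZero K ∧ ∃ r : K, r ^ 2 = -7)) :
    IsRatExt K ↥(fixedSub K (Fin 8) (Subgroup.closure
      {Equiv.swap (0 : Fin 8) 1 * Equiv.swap 2 3 * Equiv.swap 4 5 * Equiv.swap 6 7,
       Equiv.swap (0 : Fin 8) 2 * Equiv.swap 1 3 * Equiv.swap 4 6 * Equiv.swap 5 7,
       Equiv.swap (1 : Fin 8) 2 * Equiv.swap 2 6 * Equiv.swap 6 3 * Equiv.swap 3 4 * Equiv.swap 4 5 * Equiv.swap 5 7,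
       Equiv.swap (0 : Fin 8) 4 * Equiv.swap 1 5 * Equiv.swap 2 6 * Equiv.swap 3 7,
       (Equiv.swap (1 : Fin 8) 2 * Equiv.swap 2 3) * (Equiv.swap (6 : Fin 8) 5 * Equiv.swap 5 4),
       Equiv.swap (1 : Fin 8) 2 * Equiv.swap 5 6})) := by
  rcases hK with h | ⟨_, r, hr⟩
  · have : CharP K 2 := ringChar.of_eq h
    exact G48.isRatExt_fixedSub_of_charTwo
  · refine G48.isRatExt_fixedSub_of_charZero (β := (1 + r) / 2) ?_
    field_simp
    linear_combination hr
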